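/- arXiv:2106.11474 — 13 statements merged into one kernel-verified Lean document; each statement's English description precedes it below -/
import Mathlib

section
/- Let R be a commutative ring, S a multiplicative subset of R, and f : M → N an R-linear map of R-modules that is an S-isomorphism. Then there exist an R-linear map g : N → M and an element s ∈ S such that f ∘ g = s·id_N and g ∘ f = s·id_M. -/
universe u

/-- A module is uniformly `S`-torsion if a single `s ∈ S` kills it. -/
def UnifSTorsion {R : Type u} [CommRing R] (S : Submonoid R) (M : Type*) [Zero M] [SMul R M] :
    Prop :=
  ∃ s ∈ S, ∀ m : M, s • m = (0 : M)

/-- If `f : M → N` is an `S`-isomorphism (its kernel and cokernel are uniformly `S`-torsion),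
then there are `g : N → M` and `s ∈ S` with `f ∘ g = s • id` and `g ∘ f = s • id`. -/
theorem stmt0 {R : Type u} [CommRing R] (S : Submonoid R)
    {M N : Type u} [AddCommGroup M] [Module R M] [AddCommGroup N] [Module R N]
    (f : M →ₗ[R] N)
    (hker : UnifSTorsion S (LinearMap.ker f))
    (hcoker : UnifSTorsion S (N ⧸ LinearMap.range f)) :
    ∃ (g : N →ₗ[R] M) (s : R), s ∈ S ∧
      f ∘ₗ g = s • (LinearMap.id : N →ₗ[R] N) ∧
      g ∘ₗ f = s • (LinearMap.id : M →ₗ[R] M) := by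
  obtain ⟨a, ha, hak⟩ := hker
  obtain ⟨b, hb, hbc⟩ := hcoker
  have smul_eq : ∀ x y : M, f x = f y → a • x = a • y := fun x y h => by
    have := congrArg Subtype.val (hak ⟨x - y, by simp [h]⟩)
    simpa [smul_sub, sub_eq_zero] using this
  have smul_mem : ∀ n : N, ∃ m, f m = b • n := fun n => by
    have := hbc (Submodule.Quotient.mk n)
    rwa [← Submodule.Quotient.mk_smul, Submodule.Quotient.mk_eq_zero] at this
  choose lift hlift using smul_mem
  let g : N →ₗ[R] M :=
    { toFun := fun n => a • lift n
      map_add' := fun x y => by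
        rw [← smul_add]
        exact smul_eq _ _ (by simp [hlift])
      map_smul' := fun r x => by
        rw [RingHom.id_apply, smul_comm r a]
        exact smul_eq _ _ (by simp [hlift, smul_comm r b]) }
  refine ⟨g, a * b, S.mul_mem ha hb, ?_, ?_⟩
  · ext n
    change f (a • lift n) = (a * b) • n
    rw [map_smul, hlift, mul_smul]
  · ext m
    change a • lift (f m) = (a * b) • m
    rw [mul_smul]
    exact smul_eq _ _ (by simp [hlift])
end

section
/- Let R be a commutative ring, S a multiplicative subset of R, and f : M → N an S-isomorphism of R-modules. Then for every R-module L and every integer n ≥ 0, the induced map Ext^n_R(L, f) : Ext^n_R(L, M) → Ext^n_R(L, N) is an S-isomorphism. -/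
open CategoryTheory

universe u

/-- `f` is an `S`-isomorphism: its kernel and cokernel are uniformly `S`-torsion,
expressed elementwise. -/
def IsSIso {R : Type u} [CommRing R] (S : Submonoid R) {M N : Type*}
    [Zero M] [SMul R M] [Zero N] [SMul R N] (f : M → N) : Prop :=
  (∃ s ∈ S, ∀ x : M, f x = 0 → s • x = 0) ∧ (∃ s ∈ S, ∀ y : N, ∃ x : M, s • y = f x)

/-- A linear map whose kernel is killed by `s` and whose cokernel is killed by `t`
is invertible up to multiplication by `s * t`. -/
theorem LinearMap.exists_comp_eq_smul_id {R M N : Type*} [CommRing R] [AddCommGroup M]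
    [AddCommGroup N] [Module R M] [Module R N] (f : M →ₗ[R] N) {s t : R}
    (hs : ∀ x, f x = 0 → s • x = 0) (ht : ∀ y, ∃ x, t • y = f x) :
    ∃ g : N →ₗ[R] M, f ∘ₗ g = (s * t) • LinearMap.id ∧ g ∘ₗ f = (s * t) • LinearMap.id := by
  choose p hp using ht
  have key : ∀ x x', f x = f x' → s • x = s • x' := fun x x' h ↦ by
    rw [← sub_eq_zero, ← smul_sub]
    exact hs _ (by rw [map_sub, h, sub_self])
  refine ⟨{ toFun := fun y ↦ s • p y, map_add' := fun y z ↦ ?_, map_smul' := fun r y ↦ ?_ },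
    ?_, ?_⟩
  · rw [← smul_add]
    exact key _ _ (by rw [map_add, ← hp, ← hp, ← hp, smul_add])
  · rw [RingHom.id_apply, smul_comm r s]
    exact key _ _ (by rw [map_smul, ← hp, ← hp, smul_comm])
  · ext y
    simp [← hp, mul_smul]
  · ext x
    simp only [LinearMap.comp_apply, LinearMap.coe_mk, AddHom.coe_mk, LinearMap.smul_apply,
      LinearMap.id_apply, mul_smul]
    exact key _ _ (by rw [← hp, map_smul])

namespace CategoryTheory

/-- The opposite of an `R`-linear category is `R`-linear. -/
abbrev Linear.opposite (R : Type*) [Semiring R] (C : Type*) [Category* C] [Preadditive C]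
    [Linear R C] : Linear R Cᵒᵖ where
  homModule _ _ :=
    { smul := fun r f ↦ (r • f.unop).op
      one_smul := fun f ↦ Quiver.Hom.unop_inj (one_smul R f.unop)
      mul_smul := fun r s f ↦ Quiver.Hom.unop_inj (mul_smul r s f.unop)
      smul_zero := fun r ↦ Quiver.Hom.unop_inj (smul_zero r)
      smul_add := fun r f g ↦ Quiver.Hom.unop_inj (smul_add r f.unop g.unop)
      add_smul := fun r s f ↦ Quiver.Hom.unop_inj (add_smul r s f.unop)
      zero_smul := fun f ↦ Quiver.Hom.unop_inj (zero_smul R f.unop) }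
  smul_comp _ _ _ r f g := Quiver.Hom.unop_inj (Linear.comp_smul _ _ _ g.unop r f.unop)
  comp_smul _ _ _ f r g := Quiver.Hom.unop_inj (Linear.smul_comp _ _ _ r g.unop f.unop)

/-- Left derivation of natural transformations sends the scalar `r` to the scalar `r`. -/
theorem NatTrans.leftDerived_app_eq_smul_id {R : Type*} [Semiring R] {C D : Type*}
    [Category* C] [Category* D] [Abelian C] [HasProjectiveResolutions C] [Abelian D]
    [Linear R D] {F : C ⥤ D} [F.Additive] (α : F ⟶ F) (r : R)
    (hα : ∀ X, α.app X = r • 𝟙 (F.obj X)) (n : ℕ) (X : C) :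
    (NatTrans.leftDerived α n).app X = r • 𝟙 ((F.leftDerived n).obj X) := by
  have h : (NatTrans.mapHomologicalComplex α (ComplexShape.down ℕ)).app
      (projectiveResolution X).complex = r • 𝟙 _ := by
    ext i
    exact hα _
  have h' : (HomologicalComplex.homologyFunctor D (ComplexShape.down ℕ) n).map
      (r • 𝟙 ((F.mapHomologicalComplex _).obj (projectiveResolution X).complex)) = r • 𝟙 _ :=
    (ShortComplex.homologyMap_smul (𝟙 _) r).trans (by
      rw [ShortComplex.homologyMap_id]; rfl)
  rw [(projectiveResolution X).leftDerived_app_eq, h, h', Linear.smul_comp, Linear.comp_smul,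
    Category.id_comp, Iso.hom_inv_id]

end CategoryTheory

/-- `Ext` in the second argument sends the scalar `r` to the scalar `r`. -/
theorem Ext_map_smul_id {R : Type*} [CommRing R] {C : Type*} [Category* C] [Abelian C]
    [Linear R C] [EnoughProjectives C] (r : R) (n : ℕ) (X : Cᵒᵖ) (Y : C) :
    ((Ext R C n).obj X).map (r • 𝟙 Y) = r • 𝟙 (((Ext R C n).obj X).obj Y) := by
  let _ := Linear.opposite R (ModuleCat R)
  refine congrArg Quiver.Hom.unop (NatTrans.leftDerived_app_eq_smul_id
    (((linearYoneda R C).map (r • 𝟙 Y)).rightOp) r (fun Z ↦ Quiver.Hom.unop_inj ?_) n X.unop)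
  ext g
  have h (g : Z ⟶ Y) : g ≫ (r • 𝟙 Y) = r • g := by simp
  exact h g

/-- If `f : M → N` is an `S`-isomorphism of `R`-modules, then for every `R`-module `L`
and every `n ≥ 0`, the induced map `Ext^n_R(L, M) → Ext^n_R(L, N)` is an `S`-isomorphism. -/
theorem stmt1 {R : Type u} [CommRing R] (S : Submonoid R)
    {M N : ModuleCat.{u} R} (f : M ⟶ N) (hf : IsSIso S (⇑f))
    (L : ModuleCat.{u} R) (n : ℕ) :
    IsSIso S (⇑(((Ext R (ModuleCat.{u} R) n).obj (Opposite.op L)).map f)) := by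
  obtain ⟨⟨s, hsS, hs⟩, ⟨t, htS, ht⟩⟩ := hf
  obtain ⟨g, hfg, hgf⟩ := f.hom.exists_comp_eq_smul_id hs ht
  set E := (Ext R (ModuleCat.{u} R) n).obj (Opposite.op L)
  have h₁ : E.map f ≫ E.map (ModuleCat.ofHom g) = (s * t) • 𝟙 (E.obj M) := by
    rw [← E.map_comp, ← Ext_map_smul_id]
    exact congrArg E.map (ModuleCat.hom_ext hgf)
  have h₂ : E.map (ModuleCat.ofHom g) ≫ E.map f = (s * t) • 𝟙 (E.obj N) := by
    rw [← E.map_comp, ← Ext_map_smul_id]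
    exact congrArg E.map (ModuleCat.hom_ext hfg)
  refine ⟨⟨s * t, S.mul_mem hsS htS, fun x hx ↦ ?_⟩,
    ⟨s * t, S.mul_mem hsS htS, fun y ↦ ⟨E.map (ModuleCat.ofHom g) y, ?_⟩⟩⟩
  · have := ConcreteCategory.congr_hom h₁ x
    rw [ConcreteCategory.comp_apply, hx, map_zero] at this
    exact this.symm
  · exact (ConcreteCategory.congr_hom h₂ y).symm
end

section
/- Let R be a commutative ring, S a multiplicative subset of R, and f : M → N an S-isomorphism of R-modules. Then for every R-module L and every integer n ≥ 0, the induced map Ext^n_R(f, L) : Ext^n_R(N, L) → Ext^n_R(M, L) is an S-isomorphism. -/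
open CategoryTheory

universe u

namespace CategoryTheory

section Linear

variable {R : Type*} [CommRing R] {C D : Type*} [Category* C] [Category* D]

instance linearOpposite [Preadditive C] [Linear R C] : Linear R Cᵒᵖ where
  homModule _ _ :=
    { smul r f := (r • f.unop).op
      one_smul f := Quiver.Hom.unop_inj (one_smul R f.unop)
      mul_smul r s f := Quiver.Hom.unop_inj (mul_smul r s f.unop)
      smul_zero r := Quiver.Hom.unop_inj (smul_zero r)
      smul_add r f g := Quiver.Hom.unop_inj (smul_add r f.unop g.unop)
      add_smul r s f := Quiver.Hom.unop_inj (add_smul r s f.unop)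
      zero_smul f := Quiver.Hom.unop_inj (zero_smul R f.unop) }
  smul_comp _ _ _ r f g := Quiver.Hom.unop_inj (Linear.comp_smul _ _ _ g.unop r f.unop)
  comp_smul _ _ _ f r g := Quiver.Hom.unop_inj (Linear.smul_comp _ _ _ r g.unop f.unop)

lemma unop_smul [Preadditive C] [Linear R C] {X Y : Cᵒᵖ} (r : R) (f : X ⟶ Y) :
    (r • f).unop = r • f.unop :=
  rfl

instance linearYoneda_obj_rightOp_linear [Preadditive C] [Linear R C] (Y : C) :
    Functor.Linear R ((linearYoneda R C).obj Y).rightOp where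
  map_smul {X₁ X₂} f r := by
    apply Quiver.Hom.unop_inj
    ext (x : _ ⟶ _)
    exact Linear.smul_comp _ _ _ r f x

instance leftDerived_linear [Abelian C] [HasProjectiveResolutions C] [Abelian D]
    [Linear R C] [Linear R D] (F : C ⥤ D) [F.Additive] [Functor.Linear R F] (n : ℕ) :
    Functor.Linear R (F.leftDerived n) where
  map_smul {X Y} f r := by
    let P := projectiveResolution X
    let Q := projectiveResolution Y
    have hlift := ProjectiveResolution.lift_commutes f P Q
    have hsmul : (r • ProjectiveResolution.lift f P Q) ≫ Q.π =
        P.π ≫ (ChainComplex.single₀ C).map (r • f) := by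
      have hsingle : (ChainComplex.single₀ C).map (r • f) = r • (ChainComplex.single₀ C).map f := by
        ext
        simp only [HomologicalComplex.smul_f_apply, ChainComplex.single₀_map_f_zero]
        rfl
      rw [Linear.smul_comp, hlift, hsingle, Linear.comp_smul]
    rw [F.leftDerived_map_eq n f _ hlift, F.leftDerived_map_eq n (r • f) _ hsmul]
    have hhom : (HomologicalComplex.homologyFunctor D (ComplexShape.down ℕ) n).map
        (r • (F.mapHomologicalComplex (ComplexShape.down ℕ)).map
          (ProjectiveResolution.lift f P Q)) =
        r • (HomologicalComplex.homologyFunctor D (ComplexShape.down ℕ) n).map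
          ((F.mapHomologicalComplex (ComplexShape.down ℕ)).map
            (ProjectiveResolution.lift f P Q)) :=
      ShortComplex.homologyMap_smul
        ((HomologicalComplex.shortComplexFunctor D (ComplexShape.down ℕ) n).map
          ((F.mapHomologicalComplex (ComplexShape.down ℕ)).map
            (ProjectiveResolution.lift f P Q))) r
    simp only [Functor.comp_map, Functor.map_smul, hhom, Linear.smul_comp, Linear.comp_smul]

lemma Ext_map_smul_app [Abelian C] [Linear R C] [EnoughProjectives C] (n : ℕ) {X Y : C}
    (r : R) (f : X ⟶ Y) (L : C) :
    ((Ext R C n).map (r • f).op).app L = r • ((Ext R C n).map f.op).app L := by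
  have h := congrArg Quiver.Hom.unop
    ((((linearYoneda R C).obj L).rightOp.leftDerived n).map_smul r f)
  rw [unop_smul] at h
  exact h

end Linear

end CategoryTheory

/-- An `S`-isomorphism of modules is invertible up to multiplication by an element of `S`. -/
lemma IsSIso.exists_quasi_inverse {R : Type u} [CommRing R] {S : Submonoid R}
    {M N : ModuleCat.{u} R} {f : M ⟶ N} (hf : IsSIso S (⇑f)) :
    ∃ s ∈ S, ∃ g : N ⟶ M, f ≫ g = s • 𝟙 M ∧ g ≫ f = s • 𝟙 N := by
  obtain ⟨⟨s, hs, hker⟩, ⟨t, ht, hcoker⟩⟩ := hf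
  choose p hp using hcoker
  have hsmul {x x' : M} (h : f x = f x') : s • x = s • x' := by
    rw [← sub_eq_zero, ← smul_sub]
    exact hker _ (by rw [map_sub, h, sub_self])
  let g : N →ₗ[R] M :=
    { toFun y := s • p y
      map_add' y z := by
        rw [← smul_add]
        exact hsmul (by rw [map_add, ← hp, ← hp, ← hp, smul_add])
      map_smul' r y := by
        rw [RingHom.id_apply, smul_comm r s]
        exact hsmul (by rw [map_smul, ← hp, ← hp, smul_comm]) }
  refine ⟨s * t, S.mul_mem hs ht, ModuleCat.ofHom g, ?_, ?_⟩
  · ext x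
    change s • p (f x) = (s * t) • x
    rw [mul_smul]
    exact hsmul (by rw [← hp, map_smul])
  · ext y
    change f (s • p y) = (s * t) • y
    rw [map_smul, ← hp, mul_smul]

/-- A morphism of modules that is invertible up to an element of `S` is an `S`-isomorphism. -/
lemma IsSIso.of_quasi_inverse {R : Type u} [CommRing R] {S : Submonoid R}
    {M N : ModuleCat.{u} R} {f : M ⟶ N} {g : N ⟶ M} {s : R} (hs : s ∈ S)
    (hfg : f ≫ g = s • 𝟙 M) (hgf : g ≫ f = s • 𝟙 N) : IsSIso S (⇑f) := by
  refine ⟨⟨s, hs, fun x hx => ?_⟩, ⟨s, hs, fun y => ⟨g y, ?_⟩⟩⟩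
  · have h : g (f x) = s • x := ConcreteCategory.congr_hom hfg x
    rw [← h, hx, map_zero]
  · exact (ConcreteCategory.congr_hom hgf y).symm

/-- If `f : M → N` is an `S`-isomorphism of `R`-modules, then for every `R`-module `L`
and every `n ≥ 0`, the induced map `Ext^n_R(N, L) → Ext^n_R(M, L)` is an `S`-isomorphism. -/
theorem stmt2 {R : Type u} [CommRing R] (S : Submonoid R)
    {M N : ModuleCat.{u} R} (f : M ⟶ N) (hf : IsSIso S (⇑f))
    (L : ModuleCat.{u} R) (n : ℕ) :
    IsSIso S (⇑(((Ext R (ModuleCat.{u} R) n).map f.op).app L)) := by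
  obtain ⟨s, hs, g, hfg, hgf⟩ := hf.exists_quasi_inverse
  refine IsSIso.of_quasi_inverse (g := ((Ext R (ModuleCat.{u} R) n).map g.op).app L) hs ?_ ?_
  · rw [← NatTrans.comp_app, ← Functor.map_comp, ← op_comp, hgf, Ext_map_smul_app, op_id,
      CategoryTheory.Functor.map_id, NatTrans.id_app]
  · rw [← NatTrans.comp_app, ← Functor.map_comp, ← op_comp, hfg, Ext_map_smul_app, op_id,
      CategoryTheory.Functor.map_id, NatTrans.id_app]
end

section
/- Let R be a commutative ring, S a multiplicative subset of R, let 0 → A →f B →g C → 0 be an S-exact sequence of R-modules, and let M be an R-module. Then for every integer n ≥ 1 there exists an R-linear map δ_n : Ext^{n-1}_R(M, C) → Ext^n_R(M, A) such that the sequence Ext^{n-1}_R(M, B) → Ext^{n-1}_R(M, C) →δ_n→ Ext^n_R(M, A) → Ext^n_R(M, B), whose remaining maps are the ones induced by g and f, is S-exact at Ext^{n-1}_R(M, C) and at Ext^n_R(M, A). -/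
open CategoryTheory

universe u

/-- The sequence `X --u--> Y --v--> Z` is `S`-exact at `Y`:
there is `s ∈ S` with `s • ker v ⊆ im u` and `s • im u ⊆ ker v`. -/
def SExactAt {R : Type u} [CommRing R] (S : Submonoid R) {X Y Z : Type*}
    [Zero Y] [SMul R Y] [Zero Z] (u : X → Y) (v : Y → Z) : Prop :=
  ∃ s ∈ S, (∀ y : Y, v y = 0 → ∃ x : X, s • y = u x) ∧ ∀ x : X, v (s • u x) = 0

namespace CategoryTheory

open Opposite

lemma op_smul_id_comm {R : Type u} [CommRing R] (s : R) {X Y : (ModuleCat.{u} R)ᵒᵖ}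
    (h : X ⟶ Y) : h ≫ (s • 𝟙 Y.unop).op = (s • 𝟙 X.unop).op ≫ h := by
  apply Quiver.Hom.unop_inj
  simp

lemma iso_conj_eq_op_smul_id {R : Type u} [CommRing R] (s : R) {X Y : (ModuleCat.{u} R)ᵒᵖ}
    (e : X ≅ Y) {h : Y ⟶ Y} (hh : h = (s • 𝟙 Y.unop).op) :
    e.hom ≫ h ≫ e.inv = (s • 𝟙 X.unop).op := by
  rw [hh, ← op_smul_id_comm, Iso.hom_inv_id_assoc]

/-- A chain map acting in each degree as the scalar `s` acts on homology as the scalar `s`. -/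
lemma homologyMap_eq_op_smul_id {R : Type u} [CommRing R] (s : R) {ι : Type*}
    {c : ComplexShape ι} {K : HomologicalComplex (ModuleCat.{u} R)ᵒᵖ c} (φ : K ⟶ K)
    (hφ : ∀ i, φ.f i = (s • 𝟙 (K.X i).unop).op) (i : ι) :
    HomologicalComplex.homologyMap φ i = (s • 𝟙 (K.homology i).unop).op := by
  have hc : HomologicalComplex.cyclesMap φ i = (s • 𝟙 (K.cycles i).unop).op := by
    rw [← cancel_mono (K.iCycles i), HomologicalComplex.cyclesMap_i, hφ, op_smul_id_comm]
  rw [← cancel_epi (K.homologyπ i), HomologicalComplex.homologyπ_naturality, hc,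
    op_smul_id_comm]

lemma Ext_map_smul_id {R : Type u} [CommRing R] (M Y : ModuleCat.{u} R) (n : ℕ) (s : R) :
    ((Ext R (ModuleCat.{u} R) n).obj (op M)).map (s • 𝟙 Y) = s • 𝟙 _ := by
  apply Quiver.Hom.op_inj
  change (NatTrans.leftDerived (NatTrans.rightOp
    ((linearYoneda R (ModuleCat.{u} R)).map (s • 𝟙 Y))) n).app M = _
  refine (ProjectiveResolution.leftDerived_app_eq _ (projectiveResolution M) n).trans
    (iso_conj_eq_op_smul_id s _ (homologyMap_eq_op_smul_id s _ (fun i ↦ ?_) n))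
  apply Quiver.Hom.unop_inj
  ext x
  exact (Linear.comp_smul _ _ _ _ _ _).trans (congrArg (fun z : _ ⟶ Y ↦ s • z) (Category.comp_id _))

lemma Ext_map_smul {R : Type u} [CommRing R] (M : ModuleCat.{u} R) {Y Z : ModuleCat.{u} R}
    (n : ℕ) (s : R) (h : Y ⟶ Z) :
    ((Ext R (ModuleCat.{u} R) n).obj (op M)).map (s • h) =
      s • ((Ext R (ModuleCat.{u} R) n).obj (op M)).map h := by
  have : s • h = h ≫ (s • 𝟙 Z) := by simp
  rw [this, Functor.map_comp, Ext_map_smul_id]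
  simp

/-- The short complex of chain complexes `Hom(P, T)`, in the opposite category of modules. -/
noncomputable def homShortComplex {R : Type u} [CommRing R] (P : ChainComplex (ModuleCat.{u} R) ℕ)
    (T : ShortComplex (ModuleCat.{u} R)) :
    ShortComplex (ChainComplex (ModuleCat.{u} R)ᵒᵖ ℕ) where
  f := (NatTrans.mapHomologicalComplex (NatTrans.rightOp
    ((linearYoneda R (ModuleCat.{u} R)).map T.g)) _).app P
  g := (NatTrans.mapHomologicalComplex (NatTrans.rightOp
    ((linearYoneda R (ModuleCat.{u} R)).map T.f)) _).app P
  zero := by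
    ext i
    apply Quiver.Hom.unop_inj
    ext (x : P.X i ⟶ T.X₁)
    change (x ≫ T.f) ≫ T.g = 0
    simp

lemma homShortComplex_shortExact {R : Type u} [CommRing R]
    (P : ChainComplex (ModuleCat.{u} R) ℕ) [∀ i, Projective (P.X i)]
    {T : ShortComplex (ModuleCat.{u} R)} (hT : T.ShortExact) :
    (homShortComplex P T).ShortExact := by
  have := hT.mono_f
  have := hT.epi_g
  apply HomologicalComplex.shortExact_of_degreewise_shortExact
  intro i
  rw [ShortComplex.shortExact_iff_unop]
  apply ModuleCat.shortComplex_shortExact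
  · intro (x : P.X i ⟶ T.X₂)
    constructor
    · intro (hx : x ≫ T.g = 0)
      exact ⟨hT.exact.lift x hx, hT.exact.lift_f x hx⟩
    · rintro ⟨y : P.X i ⟶ T.X₁, rfl⟩
      change (y ≫ T.f) ≫ T.g = 0
      simp
  · intro (x : P.X i ⟶ T.X₁) (y : P.X i ⟶ T.X₁) (h : x ≫ T.f = y ≫ T.f)
    exact (cancel_mono T.f).1 h
  · intro (x : P.X i ⟶ T.X₃)
    exact ⟨Projective.factorThru x T.g, Projective.factorThru_comp x T.g⟩

lemma ShortComplex.Exact.of_iso_conj {𝒞 : Type*} [Category* 𝒞] [Limits.HasZeroMorphisms 𝒞]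
    {T : ShortComplex 𝒞} (hT : T.Exact) {X₁ X₂ X₃ : 𝒞} (e₁ : X₁ ≅ T.X₁) (e₂ : X₂ ≅ T.X₂)
    (e₃ : X₃ ≅ T.X₃) {a : X₁ ⟶ X₂} {b : X₂ ⟶ X₃} (ha : a = e₁.hom ≫ T.f ≫ e₂.inv)
    (hb : b = e₂.hom ≫ T.g ≫ e₃.inv) : ∃ w : a ≫ b = 0, (ShortComplex.mk a b w).Exact :=
  ⟨by simp [ha, hb], (ShortComplex.exact_iff_of_iso
    (ShortComplex.isoMk e₁ e₂ e₃ (by simp [ha]) (by simp [hb]))).2 hT⟩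

/-- The connecting maps of the long exact `Ext`-sequence in the second variable. -/
lemma exists_Ext_connecting {R : Type u} [CommRing R] (M : ModuleCat.{u} R)
    {T : ShortComplex (ModuleCat.{u} R)} (hT : T.ShortExact) (n : ℕ) :
    ∃ δ : ((Ext R (ModuleCat.{u} R) n).obj (op M)).obj T.X₃ ⟶
        ((Ext R (ModuleCat.{u} R) (n + 1)).obj (op M)).obj T.X₁,
      Function.Exact (((Ext R (ModuleCat.{u} R) n).obj (op M)).map T.g) δ ∧
      Function.Exact δ (((Ext R (ModuleCat.{u} R) (n + 1)).obj (op M)).map T.f) := by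
  let P := projectiveResolution M
  have hP := homShortComplex_shortExact P.complex hT
  let e (Y : ModuleCat.{u} R) (m : ℕ) :=
    P.isoLeftDerivedObj ((linearYoneda R (ModuleCat.{u} R)).obj Y).rightOp m
  let d := (e T.X₁ (n + 1)).hom ≫ hP.δ (n + 1) n rfl ≫ (e T.X₃ n).inv
  have hg := ProjectiveResolution.leftDerived_app_eq (NatTrans.rightOp
    ((linearYoneda R (ModuleCat.{u} R)).map T.g)) P n
  have hf := ProjectiveResolution.leftDerived_app_eq (NatTrans.rightOp
    ((linearYoneda R (ModuleCat.{u} R)).map T.f)) P (n + 1)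
  refine ⟨d.unop, ?_, ?_⟩
  · obtain ⟨_, ex⟩ := (hP.homology_exact₁ (n + 1) n rfl).of_iso_conj
      (e T.X₁ (n + 1)) (e T.X₃ n) (e T.X₂ n) (a := d) rfl hg
    exact (ShortComplex.ShortExact.moduleCat_exact_iff_function_exact _).1 ex.unop
  · obtain ⟨_, ex⟩ := (hP.homology_exact₃ (n + 1) n rfl).of_iso_conj
      (e T.X₂ (n + 1)) (e T.X₁ (n + 1)) (e T.X₃ n) (b := d) hf rfl
    exact (ShortComplex.ShortExact.moduleCat_exact_iff_function_exact _).1 ex.unop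

end CategoryTheory

/-- An `S`-exact `A → B → C` with `S`-injective first map admits a linear map `ker g → A`
which, up to elements of `S`, is inverse to the map `A → ker g` induced by `f`. -/
lemma exists_quasi_inverse_to_ker {R : Type u} [CommRing R] {A B C : ModuleCat.{u} R}
    (f : A ⟶ B) (g : B ⟶ C) {s t : R} (hs : ∀ x : A, f x = 0 → s • x = (0 : A))
    (ht : ∀ y : B, g y = 0 → ∃ x : A, t • y = f x) (ht' : ∀ x : A, g (t • f x) = 0) :
    ∃ (φ : A ⟶ ModuleCat.of R (LinearMap.ker g.hom))
      (ψ : ModuleCat.of R (LinearMap.ker g.hom) ⟶ A),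
      φ ≫ ModuleCat.ofHom (LinearMap.ker g.hom).subtype = t • f ∧
      ψ ≫ f = (s * t) • ModuleCat.ofHom (LinearMap.ker g.hom).subtype ∧
      φ ≫ ψ = (s * t * t) • 𝟙 _ ∧ ψ ≫ φ = (s * t * t) • 𝟙 _ := by
  choose a ha using fun y : LinearMap.ker g.hom ↦ ht y.1 y.2
  have eq_of {x y : A} (h : f x = f y) : s • x = s • y := by
    rw [← sub_eq_zero, ← smul_sub]
    exact hs _ (by rw [map_sub, h, sub_self])
  let φ : A →ₗ[R] LinearMap.ker g.hom := (t • f.hom).codRestrict _ ht'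
  let ψ : LinearMap.ker g.hom →ₗ[R] A :=
    { toFun y := s • a y
      map_add' x y := by
        rw [← smul_add]
        exact eq_of (by rw [map_add, ← ha, ← ha, ← ha, ← smul_add]; rfl)
      map_smul' r x := by
        rw [RingHom.id_apply, smul_comm r s]
        exact eq_of (by rw [map_smul, ← ha, ← ha, smul_comm r t]; rfl) }
  have hψ (y : LinearMap.ker g.hom) : f (ψ y) = (s * t) • y.1 := by
    change f (s • a y) = _
    rw [map_smul, ← ha, mul_smul]
  refine ⟨ModuleCat.ofHom φ, ModuleCat.ofHom ψ, rfl, ?_, ?_, ?_⟩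
  · ext y
    exact hψ y
  · ext x
    change s • a (φ x) = (s * t * t) • x
    rw [mul_assoc, mul_smul]
    refine eq_of ?_
    rw [← ha, map_smul, mul_smul]
    rfl
  · ext y
    change t • f (ψ y) = (s * t * t) • y.1
    rw [hψ, smul_smul, mul_comm]

/-- Given an `S`-exact sequence `0 → A → B → C → 0` and a module `M`, for every `n ≥ 1`
there is a connecting map `δₙ : Ext^{n-1}(M,C) → Ext^n(M,A)` making the sequence
`Ext^{n-1}(M,B) → Ext^{n-1}(M,C) → Ext^n(M,A) → Ext^n(M,B)` `S`-exact at the two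
middle spots. -/
theorem stmt3 {R : Type u} [CommRing R] (S : Submonoid R)
    {A B C : ModuleCat.{u} R} (f : A ⟶ B) (g : B ⟶ C)
    (hA : ∃ s ∈ S, ∀ x : A, f x = 0 → s • x = (0 : A))
    (hB : SExactAt S (⇑f) (⇑g))
    (hC : ∃ s ∈ S, ∀ c : C, ∃ b : B, s • c = g b)
    (M : ModuleCat.{u} R) :
    ∀ n : ℕ, 1 ≤ n →
      ∃ δ : ((Ext R (ModuleCat.{u} R) (n - 1)).obj (Opposite.op M)).obj C ⟶
            ((Ext R (ModuleCat.{u} R) n).obj (Opposite.op M)).obj A,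
        SExactAt S (⇑(((Ext R (ModuleCat.{u} R) (n - 1)).obj (Opposite.op M)).map g)) (⇑δ) ∧
        SExactAt S (⇑δ) (⇑(((Ext R (ModuleCat.{u} R) n).obj (Opposite.op M)).map f)) := by
  rintro n hn
  obtain ⟨n, rfl⟩ := Nat.exists_eq_add_of_le' hn
  obtain ⟨s, hs, hA⟩ := hA
  obtain ⟨t, ht, hB, hB'⟩ := hB
  obtain ⟨r, hr, hC⟩ := hC
  obtain ⟨φ, ψ, hφ, hψ, hφψ, hψφ⟩ := exists_quasi_inverse_to_ker f g hA hB hB'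
  let i := ModuleCat.ofHom (LinearMap.ker g.hom).subtype
  let p := ModuleCat.ofHom g.hom.rangeRestrict
  let j := ModuleCat.ofHom (LinearMap.range g.hom).subtype
  let χ : C ⟶ ModuleCat.of R (LinearMap.range g.hom) :=
    ModuleCat.ofHom ((r • LinearMap.id).codRestrict _ fun c ↦
      let ⟨b, hb⟩ := hC c
      ⟨b, hb.symm⟩)
  have hχj : χ ≫ j = r • 𝟙 _ := rfl
  have hjχ : j ≫ χ = r • 𝟙 _ := rfl
  have hip : i ≫ p = 0 := by
    ext y
    exact y.2
  have hT : (ShortComplex.mk i p hip).ShortExact := by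
    apply ModuleCat.shortComplex_shortExact
    · intro y
      constructor
      · intro hy
        exact ⟨⟨y, congrArg Subtype.val hy⟩, rfl⟩
      · rintro ⟨y, rfl⟩
        exact Subtype.ext y.2
    · exact Subtype.val_injective
    · exact g.hom.surjective_rangeRestrict
  obtain ⟨δ, h₃, h₁⟩ := exists_Ext_connecting M hT n
  dsimp only at δ h₃ h₁
  let E (m : ℕ) := (Ext R (ModuleCat.{u} R) m).obj (Opposite.op M)
  change (E n).obj _ ⟶ (E (n + 1)).obj _ at δ
  change Function.Exact ((E n).map p) δ at h₃
  change Function.Exact δ ((E (n + 1)).map i) at h₁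
  have comp_apply (m : ℕ) {X Y Z : ModuleCat.{u} R} (a : X ⟶ Y) (b : Y ⟶ Z)
      (x : (E m).obj X) : (E m).map b ((E m).map a x) = (E m).map (a ≫ b) x := by
    rw [Functor.map_comp]
    rfl
  have smul_apply (m : ℕ) {X Y : ModuleCat.{u} R} (c : R) (a : X ⟶ Y)
      (x : (E m).obj X) : (E m).map (c • a) x = c • (E m).map a x := by
    simp only [E, Ext_map_smul]
    rfl
  have id_apply (m : ℕ) (X : ModuleCat.{u} R) (x : (E m).obj X) : (E m).map (𝟙 X) x = x := by
    rw [CategoryTheory.Functor.map_id]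
    rfl
  have hg (x) : (E n).map g x = (E n).map j ((E n).map p x) := (comp_apply n p j x).symm
  have hsS : r * (s * t * t) ∈ S := S.mul_mem hr (S.mul_mem (S.mul_mem hs ht) ht)
  change ∃ δ : (E n).obj C ⟶ (E (n + 1)).obj A,
    SExactAt S ((E n).map g) δ ∧ SExactAt S δ ((E (n + 1)).map f)
  let d : (E n).obj C ⟶ (E (n + 1)).obj A := (E n).map χ ≫ δ ≫ (E (n + 1)).map ψ
  have hd (y) : d y = (E (n + 1)).map ψ (δ ((E n).map χ y)) := rfl
  refine ⟨d, ⟨_, hsS, fun y hy ↦ ?_, fun x ↦ ?_⟩, ⟨_, hsS, fun y hy ↦ ?_, fun x ↦ ?_⟩⟩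
  · have hy' : δ ((E n).map χ ((s * t * t) • y)) = 0 := by
      rw [map_smul, map_smul, ← id_apply _ _ (δ _), ← smul_apply, ← hψφ, ← comp_apply, ← hd,
        hy, map_zero]
    obtain ⟨x, hx⟩ := (h₃ _).1 hy'
    refine ⟨x, ?_⟩
    rw [hg, hx, comp_apply, hχj, smul_apply, id_apply, mul_smul]
  · rw [map_smul, hd, hg, comp_apply _ j, hjχ, smul_apply, id_apply, map_smul,
      h₃.apply_apply_eq_zero, smul_zero, map_zero, smul_zero]
  · have hy' : (E (n + 1)).map i ((E (n + 1)).map φ y) = 0 := by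
      rw [comp_apply, hφ, smul_apply, hy, smul_zero]
    obtain ⟨z, hz⟩ := (h₁ _).1 hy'
    refine ⟨(E n).map j z, ?_⟩
    rw [hd, comp_apply, hjχ, smul_apply, id_apply, map_smul, map_smul, hz, comp_apply, hφψ,
      smul_apply, id_apply, mul_smul]
  · rw [map_smul, hd, comp_apply, hψ, smul_apply, h₁.apply_apply_eq_zero, smul_zero, smul_zero]
end

section
/- Let R be a commutative ring, S a multiplicative subset of R, and 0 → A → B → C → 0 an S-exact sequence of R-modules in which B is S-projective. Then for every R-module N and every integer n ≥ 1, there exists an S-isomorphism between Ext^n_R(A, N) and Ext^{n+1}_R(C, N). -/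
open CategoryTheory

universe u

namespace CategoryTheory.ProjectiveResolution

variable {R : Type*} [Ring R] {C : Type*} [Category* C] [Abelian C] [Linear R C]
  [HasExt C] {X : C} (P : ProjectiveResolution X)

lemma smul_extMk {Y : C} {n : ℕ} (r : R) (f : P.complex.X n ⟶ Y) (m : ℕ) (hm : n + 1 = m)
    (hf : P.complex.d m n ≫ f = 0) :
    r • P.extMk f m hm hf = P.extMk (r • f) m hm (by simp [hf]) := by
  simp [Abelian.Ext.smul_eq_comp_mk₀, extMk_comp_mk₀]

variable (R) in
/-- The `R`-linear map sending a cocycle of a projective resolution to its class in `Ext`. -/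
noncomputable def cocycleToExt (Y : C) (i n m : ℕ) (hm : n + 1 = m) :
    LinearMap.ker ((P.complex.linearYonedaObj R Y).sc' i n m).g.hom →ₗ[R]
      Abelian.Ext X Y n where
  toFun f := P.extMk (show P.complex.X n ⟶ Y from f.1) m hm f.2
  map_add' f g := (P.add_extMk _ _ m hm f.2 g.2).symm
  map_smul' r f := (P.smul_extMk r _ m hm f.2).symm

lemma cocycleToExt_surjective (Y : C) (i n m : ℕ) (hm : n + 1 = m) :
    Function.Surjective (P.cocycleToExt R Y i n m hm) := fun α ↦ by
  obtain ⟨f, hf, rfl⟩ := P.extMk_surjective α m hm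
  exact ⟨⟨f, hf⟩, rfl⟩

lemma ker_cocycleToExt (Y : C) (i n m : ℕ) (hm : n + 1 = m) (hi : i + 1 = n) :
    LinearMap.ker (P.cocycleToExt R Y i n m hm) =
      LinearMap.range ((P.complex.linearYonedaObj R Y).sc' i n m).moduleCatToCycles := by
  ext f
  refine (P.extMk_eq_zero_iff _ m hm f.2 i hi).trans ?_
  exact ⟨fun ⟨g, hg⟩ ↦ ⟨g, Subtype.ext hg⟩, fun ⟨g, hg⟩ ↦ ⟨g, congrArg Subtype.val hg⟩⟩

variable (R) in
/-- In positive degrees, the derived functor `Ext` agrees with the `Ext` modules defined by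
morphisms in the derived category. -/
noncomputable def extLinearEquiv [EnoughProjectives C] (Y : C) (n : ℕ) :
    ((Ext R C (n + 1)).obj (Opposite.op X)).obj Y ≃ₗ[R] Abelian.Ext X Y (n + 1) :=
  (P.isoExt (n + 1) Y ≪≫ HomologicalComplex.homologyIsoSc' _ n (n + 1) (n + 2)
    (by simp) (by simp) ≪≫ ShortComplex.moduleCatHomologyIso _).toLinearEquiv ≪≫ₗ
  Submodule.quotEquivOfEq _ _ (P.ker_cocycleToExt Y n (n + 1) (n + 2) rfl rfl).symm ≪≫ₗ
  (P.cocycleToExt R Y n (n + 1) (n + 2) rfl).quotKerEquivOfSurjective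
    (P.cocycleToExt_surjective Y n (n + 1) (n + 2) rfl)

end CategoryTheory.ProjectiveResolution

section SIso

variable {R : Type*} [CommRing R] {S : Submonoid R} {M N P : Type*}
  [AddCommGroup M] [Module R M] [AddCommGroup N] [Module R N] [AddCommGroup P] [Module R P]

lemma IsSIso.comp {g : N →ₗ[R] P} {f : M →ₗ[R] N} (hg : IsSIso S g) (hf : IsSIso S f) :
    IsSIso S (g ∘ₗ f) := by
  obtain ⟨⟨s, hs, hsf⟩, t, ht, htf⟩ := hf
  obtain ⟨⟨s', hs', hsg⟩, t', ht', htg⟩ := hg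
  refine ⟨⟨s * s', S.mul_mem hs hs', fun x hx ↦ ?_⟩, ⟨t * t', S.mul_mem ht ht', fun z ↦ ?_⟩⟩
  · rw [mul_smul]
    exact hsf _ (by rw [map_smul]; exact hsg _ hx)
  · obtain ⟨y, hy⟩ := htg z
    obtain ⟨x, hx⟩ := htf y
    exact ⟨x, by simp [mul_smul, hy, ← hx]⟩

lemma LinearEquiv.isSIso (e : M ≃ₗ[R] N) : IsSIso S (e : M →ₗ[R] N) :=
  ⟨⟨1, S.one_mem, fun x hx ↦ by simpa using hx⟩, ⟨1, S.one_mem, fun y ↦ ⟨e.symm y, by simp⟩⟩⟩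

/-- A linear map with an inverse up to multiplication by `s ∈ S` is an `S`-isomorphism. -/
lemma IsSIso.of_comp_eq_smul_id {f : M →ₗ[R] N} {k : N →ₗ[R] M} {s : R} (hs : s ∈ S)
    (hfk : f ∘ₗ k = s • LinearMap.id) (hkf : k ∘ₗ f = s • LinearMap.id) : IsSIso S f := by
  refine ⟨⟨s, hs, fun x hx ↦ ?_⟩, ⟨s, hs, fun y ↦ ⟨k y, ?_⟩⟩⟩
  · simpa [hx] using (LinearMap.congr_fun hkf x).symm
  · simpa using (LinearMap.congr_fun hfk y).symm

/-- An `S`-isomorphism has an inverse up to multiplication by some `s ∈ S`. -/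
lemma IsSIso.exists_comp_eq_smul_id {f : M →ₗ[R] N} (hf : IsSIso S f) :
    ∃ s ∈ S, ∃ k : N →ₗ[R] M, f ∘ₗ k = s • LinearMap.id ∧ k ∘ₗ f = s • LinearMap.id := by
  obtain ⟨⟨s, hs, hsf⟩, t, ht, htf⟩ := hf
  choose σ hσ using htf
  have key (x : M) (y : N) (h : t • y = f x) : s • σ y = s • x := by
    rw [← sub_eq_zero, ← smul_sub]
    exact hsf _ (by simp [← hσ, h])
  refine ⟨s * t, S.mul_mem hs ht,
    { toFun y := s • σ y
      map_add' y z := by rw [← smul_add]; exact key _ _ (by simp [← hσ])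
      map_smul' r y := by
        rw [RingHom.id_apply, smul_comm r s]; exact key _ _ (by simp [← hσ, smul_comm t r]) },
    ?_, ?_⟩
  · ext y
    simp [← hσ, mul_smul]
  · ext x
    simpa [mul_smul] using key (t • x) (f x) (by simp)

end SIso

namespace ModuleCat

open CategoryTheory.Abelian

variable {R : Type u} [CommRing R] {S : Submonoid R}

/-- An `S`-isomorphism `X ⟶ Y` induces an `S`-isomorphism from `Ext X N n` to `Ext Y N n`, by
precomposition with an inverse up to `S`. -/
lemma exists_isSIso_ext_of_isSIso {X Y : ModuleCat.{u} R} {h : X ⟶ Y} (hh : IsSIso S h)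
    (N : ModuleCat.{u} R) (n : ℕ) :
    ∃ e : Ext X N n →ₗ[R] Ext Y N n, IsSIso S e := by
  obtain ⟨s, hs, k, hk, hk'⟩ := IsSIso.exists_comp_eq_smul_id (f := h.hom) hh
  have h₁ : ofHom k ≫ h = s • 𝟙 Y := by ext : 1; exact hk
  have h₂ : h ≫ ofHom k = s • 𝟙 X := by ext : 1; exact hk'
  have e₁ : (Ext.mk₀ (ofHom k)).precompOfLinear R N (zero_add n) ∘ₗ
      (Ext.mk₀ h).precompOfLinear R N (zero_add n) = s • LinearMap.id := by
    ext x
    simp [h₁, Ext.mk₀_smul]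
  have e₂ : (Ext.mk₀ h).precompOfLinear R N (zero_add n) ∘ₗ
      (Ext.mk₀ (ofHom k)).precompOfLinear R N (zero_add n) = s • LinearMap.id := by
    ext x
    simp [h₂, Ext.mk₀_smul]
  exact ⟨_, .of_comp_eq_smul_id hs e₁ e₂⟩

/-- An `S`-projective module has uniformly `S`-torsion `Ext` in all positive degrees. -/
lemma unifSTorsion_ext_succ {B : ModuleCat.{u} R}
    (hB : ∀ N : ModuleCat.{u} R, UnifSTorsion S (Ext B N 1)) (N : ModuleCat.{u} R) (n : ℕ) :
    UnifSTorsion S (Ext B N (n + 1)) := by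
  induction n generalizing N with
  | zero => exact hB N
  | succ n ih =>
    let T := ShortComplex.mk (Injective.ι N) (Limits.cokernel.π (Injective.ι N)) (by simp)
    have hT : T.ShortExact := { exact := ShortComplex.exact_cokernel _ }
    obtain ⟨s, hs, h⟩ := ih T.X₃
    refine ⟨s, hs, fun x ↦ ?_⟩
    obtain ⟨y, rfl⟩ := Ext.covariant_sequence_exact₁ B hT x (Ext.eq_zero_of_injective _) rfl
    rw [← Ext.smul_comp, h, Ext.zero_comp]

/-- The connecting maps of a short exact sequence with `S`-projective middle term are
`S`-isomorphisms in positive degrees. -/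
lemma isSIso_precomp_extClass {T : ShortComplex (ModuleCat.{u} R)} (hT : T.ShortExact)
    (hB : ∀ N : ModuleCat.{u} R, UnifSTorsion S (Ext T.X₂ N 1)) (N : ModuleCat.{u} R) (n : ℕ) :
    IsSIso S (hT.extClass.precompOfLinear R N (add_comm 1 (n + 1))) := by
  obtain ⟨s, hs, h⟩ := unifSTorsion_ext_succ hB N n
  obtain ⟨t, ht, h'⟩ := unifSTorsion_ext_succ hB N (n + 1)
  refine ⟨⟨s, hs, fun x hx ↦ ?_⟩, ⟨t, ht, fun y ↦ ?_⟩⟩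
  · obtain ⟨z, rfl⟩ := Ext.contravariant_sequence_exact₁ hT N x (add_comm 1 (n + 1)) hx
    rw [← Ext.comp_smul, h, Ext.comp_zero]
  · obtain ⟨x, hx⟩ := Ext.contravariant_sequence_exact₃ hT N (t • y)
      (by rw [Ext.comp_smul, h']) (add_comm 1 (n + 1))
    exact ⟨x, hx.symm⟩

end ModuleCat

/-- If `0 → A → B → C → 0` is `S`-exact with `B` `S`-projective, then for every module `N`
and every `n ≥ 1` there is an `S`-isomorphism `Ext^n(A, N) → Ext^{n+1}(C, N)`. -/
theorem stmt4 {R : Type u} [CommRing R] (S : Submonoid R)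
    {A B C : ModuleCat.{u} R} (f : A ⟶ B) (g : B ⟶ C)
    (hA : ∃ s ∈ S, ∀ x : A, f x = 0 → s • x = (0 : A))
    (hB : SExactAt S (⇑f) (⇑g))
    (hC : ∃ s ∈ S, ∀ c : C, ∃ b : B, s • c = g b)
    (hBproj : ∀ N : ModuleCat.{u} R,
      UnifSTorsion S (((Ext R (ModuleCat.{u} R) 1).obj (Opposite.op B)).obj N)) :
    ∀ (N : ModuleCat.{u} R) (n : ℕ), 1 ≤ n →
      ∃ e : ((Ext R (ModuleCat.{u} R) n).obj (Opposite.op A)).obj N ⟶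
            ((Ext R (ModuleCat.{u} R) (n + 1)).obj (Opposite.op C)).obj N,
        IsSIso S (⇑e) := by
  intro N n hn
  obtain ⟨n, rfl⟩ := Nat.exists_eq_add_of_le' hn
  have hBproj' (N : ModuleCat.{u} R) : UnifSTorsion S (Abelian.Ext B N 1) := by
    obtain ⟨s, hs, h⟩ := hBproj N
    let e := (projectiveResolution B).extLinearEquiv R N 0
    exact ⟨s, hs, fun x ↦ e.symm.injective (by rw [map_smul, map_zero]; exact h _)⟩
  let T : ShortComplex (ModuleCat.{u} R) :=
    .mk (ModuleCat.ofHom (LinearMap.ker g.hom).subtype) (ModuleCat.ofHom g.hom.rangeRestrict)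
      (by ext x : 2; exact Subtype.ext x.2)
  have hT : T.ShortExact :=
    { exact := by
        rw [ShortComplex.moduleCat_exact_iff]
        exact fun x hx ↦ ⟨⟨x, congrArg Subtype.val hx⟩, rfl⟩
      mono_f := (ModuleCat.mono_iff_injective _).2 (Submodule.subtype_injective _)
      epi_g := (ModuleCat.epi_iff_surjective _).2 g.hom.surjective_rangeRestrict }
  obtain ⟨t, ht, ht₁, ht₂⟩ := hB
  let a : A ⟶ T.X₁ := ModuleCat.ofHom ((t • f.hom).codRestrict (LinearMap.ker g.hom) ht₂)
  have ha : IsSIso S a := by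
    obtain ⟨s, hs, h⟩ := hA
    refine ⟨⟨s * t, S.mul_mem hs ht, fun x hx ↦ ?_⟩, ⟨t * t, S.mul_mem ht ht, fun y ↦ ?_⟩⟩
    · rw [mul_smul]
      exact h _ ((f.hom.map_smul t x).trans (congrArg Subtype.val hx))
    · obtain ⟨x, hx⟩ := ht₁ y.1 y.2
      refine ⟨x, Subtype.ext ?_⟩
      change (t * t) • y.1 = t • f x
      rw [mul_smul, hx]
  let c : T.X₃ ⟶ C := ModuleCat.ofHom (LinearMap.range g.hom).subtype
  have hc : IsSIso S c := by
    obtain ⟨s, hs, h⟩ := hC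
    refine ⟨⟨1, S.one_mem, fun x hx ↦ ?_⟩, ⟨s, hs, fun y ↦ ?_⟩⟩
    · rw [one_smul]
      exact Subtype.ext hx
    · obtain ⟨b, hb⟩ := h y
      exact ⟨⟨g b, b, rfl⟩, hb⟩
  obtain ⟨e₁, he₁⟩ := ModuleCat.exists_isSIso_ext_of_isSIso ha N (n + 1)
  obtain ⟨e₃, he₃⟩ := ModuleCat.exists_isSIso_ext_of_isSIso hc N (n + 1 + 1)
  have he₂ := ModuleCat.isSIso_precomp_extClass hT hBproj' N n
  exact ⟨ModuleCat.ofHom _,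
    ((projectiveResolution C).extLinearEquiv R N (n + 1)).symm.isSIso.comp <|
      he₃.comp <| he₂.comp <| he₁.comp
        ((projectiveResolution A).extLinearEquiv R N n).isSIso⟩
end

section
/- Let R be a commutative ring, S a multiplicative subset of R, M an R-module and n ≥ 0 an integer. If Ext^{n+1}_R(M, N) is uniformly S-torsion for every R-module N, then Ext^{n+k}_R(M, N) is uniformly S-torsion for every R-module N and every integer k ≥ 1. -/
open CategoryTheory

universe u

/-- A scalar kills the homology of a short complex of modules if and only if it maps every cycle
to a boundary. -/
lemma smul_homology_eq_zero_iff {A : Type*} [CommRing A] (T : ShortComplex (ModuleCat A)) (s : A) :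
    (∀ x : T.homology, s • x = 0) ↔ ∀ z : T.X₂, T.g z = 0 → ∃ b : T.X₁, T.f b = s • z := by
  let e : T.homology ≃ₗ[A] (LinearMap.ker T.g.hom ⧸ LinearMap.range T.moduleCatToCycles) :=
    T.moduleCatHomologyIso.toLinearEquiv
  have he : (∀ x : T.homology, s • x = 0) ↔
      ∀ y : LinearMap.ker T.g.hom ⧸ LinearMap.range T.moduleCatToCycles, s • y = 0 := by
    refine ⟨fun h y ↦ e.symm.injective ?_, fun h x ↦ e.injective ?_⟩
    · rw [map_smul, map_zero, h]
    · rw [map_smul, map_zero, h]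
  rw [he, (Submodule.mkQ_surjective _).forall]
  simp only [Submodule.mkQ_apply, ← Submodule.Quotient.mk_smul, Submodule.Quotient.mk_eq_zero,
    Subtype.forall, LinearMap.mem_range, LinearMap.mem_ker]
  exact forall₂_congr fun z hz ↦ exists_congr fun b ↦ Subtype.ext_iff

section

variable {R : Type u} [CommRing R] {M : ModuleCat.{u} R}

/-- In positive degrees, a scalar kills `Ext(M, N)` if and only if it maps every cocycle of a
projective resolution of `M` with values in `N` to a coboundary. -/
lemma smul_Ext_succ_eq_zero_iff (P : ProjectiveResolution M) (N : ModuleCat.{u} R) (n : ℕ) (s : R) :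
    (∀ x : ((Ext R (ModuleCat.{u} R) (n + 1)).obj (Opposite.op M)).obj N, s • x = 0) ↔
      ∀ f : P.complex.X (n + 1) ⟶ N, P.complex.d (n + 2) (n + 1) ≫ f = 0 →
        ∃ g : P.complex.X n ⟶ N, P.complex.d (n + 1) n ≫ g = s • f := by
  let K := P.complex.linearYonedaObj R N
  let e := (P.isoExt (R := R) (n + 1) N ≪≫
    K.homologyIsoSc' n (n + 1) (n + 2) (by simp) (by simp)).toLinearEquiv
  have he : (∀ x : ((Ext R (ModuleCat.{u} R) (n + 1)).obj (Opposite.op M)).obj N, s • x = 0) ↔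
      ∀ y : (K.sc' n (n + 1) (n + 2)).homology, s • y = 0 := by
    refine ⟨fun h y ↦ e.symm.injective ?_, fun h x ↦ e.injective ?_⟩
    · rw [map_smul, map_zero, h]
    · rw [map_smul, map_zero, h]
  rw [he, smul_homology_eq_zero_iff]
  exact Iff.rfl

/-- If `s` kills `Ext^{n+1}(M, -)` on the cokernel of a differential of a projective resolution,
then `s` times the next differential factors through it on both sides. -/
lemma exists_d_comp_comp_d_eq_smul (P : ProjectiveResolution M) (n : ℕ) (s : R)
    (h : ∀ x : ((Ext R (ModuleCat.{u} R) (n + 1)).obj (Opposite.op M)).obj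
      (Limits.cokernel (P.complex.d (n + 2) (n + 1))), s • x = 0) :
    ∃ u : P.complex.X n ⟶ P.complex.X (n + 1),
      P.complex.d (n + 1) n ≫ u ≫ P.complex.d (n + 1) n = s • P.complex.d (n + 1) n := by
  obtain ⟨g, hg⟩ := (smul_Ext_succ_eq_zero_iff P _ n s).1 h
    (Limits.cokernel.π (P.complex.d (n + 2) (n + 1))) (Limits.cokernel.condition _)
  let π := Limits.cokernel.π (P.complex.d (n + 2) (n + 1))
  let i := Limits.cokernel.desc (P.complex.d (n + 2) (n + 1)) (P.complex.d (n + 1) n) (by simp)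
  have hi : π ≫ i = P.complex.d (n + 1) n := Limits.cokernel.π_desc _ _ _
  refine ⟨Projective.factorThru g π, ?_⟩
  calc P.complex.d (n + 1) n ≫ Projective.factorThru g π ≫ P.complex.d (n + 1) n
      = P.complex.d (n + 1) n ≫ Projective.factorThru g π ≫ π ≫ i := by rw [hi]
    _ = (P.complex.d (n + 1) n ≫ g) ≫ i := by
      rw [Projective.factorThru_comp_assoc, Category.assoc]
    _ = s • P.complex.d (n + 1) n := by rw [hg, Linear.smul_comp, hi]

/-- A factorization of `s` times a differential of a projective resolution extends to a homotopy
formula for multiplication by `s` in the next degree. -/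
lemma exists_d_comp_add_comp_d_eq_smul_id (P : ProjectiveResolution M) (n : ℕ) (s : R)
    (u : P.complex.X n ⟶ P.complex.X (n + 1))
    (hu : P.complex.d (n + 1) n ≫ u ≫ P.complex.d (n + 1) n = s • P.complex.d (n + 1) n) :
    ∃ w : P.complex.X (n + 1) ⟶ P.complex.X (n + 2),
      P.complex.d (n + 1) n ≫ u + w ≫ P.complex.d (n + 2) (n + 1) =
        s • 𝟙 (P.complex.X (n + 1)) := by
  have hv : (s • 𝟙 (P.complex.X (n + 1)) - P.complex.d (n + 1) n ≫ u) ≫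
      P.complex.d (n + 1) n = 0 := by
    rw [Preadditive.sub_comp, Linear.smul_comp, Category.id_comp, Category.assoc, hu, sub_self]
  refine ⟨(P.exact_succ n).liftFromProjective _ hv, ?_⟩
  rw [(P.exact_succ n).liftFromProjective_comp _ hv, add_sub_cancel]

/-- The factorization of `s` times a differential propagates to all higher degrees. -/
lemma exists_d_comp_comp_d_eq_smul_add (P : ProjectiveResolution M) (n : ℕ) (s : R)
    (h : ∃ u : P.complex.X n ⟶ P.complex.X (n + 1),
      P.complex.d (n + 1) n ≫ u ≫ P.complex.d (n + 1) n = s • P.complex.d (n + 1) n) (k : ℕ) :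
    ∃ u : P.complex.X (n + k) ⟶ P.complex.X (n + k + 1),
      P.complex.d (n + k + 1) (n + k) ≫ u ≫ P.complex.d (n + k + 1) (n + k) =
        s • P.complex.d (n + k + 1) (n + k) := by
  induction k with
  | zero => exact h
  | succ k ih =>
    obtain ⟨u, hu⟩ := ih
    obtain ⟨w, hw⟩ := exists_d_comp_add_comp_d_eq_smul_id P (n + k) s u hu
    refine ⟨w, ?_⟩
    have hd := congr(P.complex.d (n + k + 2) (n + k + 1) ≫ $hw)
    rwa [Preadditive.comp_add, HomologicalComplex.d_comp_d_assoc, Limits.zero_comp, zero_add,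
      Linear.comp_smul, Category.comp_id] at hd

/-- If `s` times a differential of a projective resolution factors through it on both sides, then
`s` kills the corresponding `Ext` modules. -/
lemma smul_Ext_succ_eq_zero (P : ProjectiveResolution M) (n : ℕ) (s : R)
    (h : ∃ u : P.complex.X n ⟶ P.complex.X (n + 1),
      P.complex.d (n + 1) n ≫ u ≫ P.complex.d (n + 1) n = s • P.complex.d (n + 1) n)
    (N : ModuleCat.{u} R) (x : ((Ext R (ModuleCat.{u} R) (n + 1)).obj (Opposite.op M)).obj N) :
    s • x = 0 := by
  obtain ⟨u, hu⟩ := h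
  obtain ⟨w, hw⟩ := exists_d_comp_add_comp_d_eq_smul_id P n s u hu
  refine (smul_Ext_succ_eq_zero_iff P N n s).2 (fun f hf ↦ ⟨u ≫ f, ?_⟩) x
  have hwf := congr($hw ≫ f)
  rwa [Preadditive.add_comp, Category.assoc, Category.assoc, hf, Limits.comp_zero, add_zero,
    Linear.smul_comp, Category.id_comp] at hwf

end

/-- If `Ext^{n+1}(M, N)` is uniformly `S`-torsion for every `N`, then so is
`Ext^{n+k}(M, N)` for every `N` and every `k ≥ 1`. -/
theorem stmt6 {R : Type u} [CommRing R] (S : Submonoid R) (M : ModuleCat.{u} R) (n : ℕ)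
    (h : ∀ N : ModuleCat.{u} R,
      UnifSTorsion S (((Ext R (ModuleCat.{u} R) (n + 1)).obj (Opposite.op M)).obj N)) :
    ∀ (N : ModuleCat.{u} R) (k : ℕ), 1 ≤ k →
      UnifSTorsion S (((Ext R (ModuleCat.{u} R) (n + k)).obj (Opposite.op M)).obj N) := by
  intro N k hk
  obtain ⟨k, rfl⟩ := Nat.exists_eq_add_of_le' hk
  let P := projectiveResolution M
  obtain ⟨s, hs, hsx⟩ := h (Limits.cokernel (P.complex.d (n + 2) (n + 1)))
  exact ⟨s, hs, smul_Ext_succ_eq_zero P (n + k) s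
    (exists_d_comp_comp_d_eq_smul_add P n s (exists_d_comp_comp_d_eq_smul P n s hsx) k) N⟩
end

section
/- Let R be a commutative ring, S a multiplicative subset of R, M an R-module and n ≥ 1 an integer such that Ext^{n+1}_R(M, N) is uniformly S-torsion for every R-module N. If 0 → F_n → F_{n-1} → ⋯ → F_1 → F_0 → M → 0 is an exact sequence of R-modules in which F_0, F_1, …, F_{n-1} are projective, then F_n is S-projective. -/
open CategoryTheory

universe u

/-- A scalar kills the homology of a short complex of modules iff it sends cycles to boundaries. -/
lemma CategoryTheory.ShortComplex.forall_smul_homology_eq_zero_iff {R : Type*} [CommRing R]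
    (K : ShortComplex (ModuleCat R)) (s : R) :
    (∀ x : K.homology, s • x = 0) ↔
      ∀ f : K.X₂, K.g.hom f = 0 → ∃ g : K.X₁, K.f.hom g = s • f := by
  let e := K.moduleCatHomologyIso.toLinearEquiv
  have he : (∀ x : K.homology, s • x = 0) ↔
      ∀ x : K.moduleCatLeftHomologyData.H, s • x = 0 :=
    ⟨fun h x ↦ by simpa using congrArg e (h (e.symm x)),
      fun h x ↦ e.injective (by simpa using h (e x))⟩
  rw [he]
  constructor
  · intro h f hf
    have hz := h (Submodule.Quotient.mk (⟨f, hf⟩ : LinearMap.ker K.g.hom))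
    obtain ⟨g, hg⟩ := (Submodule.Quotient.mk_eq_zero _).1 hz
    exact ⟨g, congrArg Subtype.val hg⟩
  · intro h x
    obtain ⟨⟨f, hf⟩, rfl⟩ := Submodule.Quotient.mk_surjective _ x
    obtain ⟨g, hg⟩ := h f hf
    exact (Submodule.Quotient.mk_eq_zero _).2 ⟨g, Subtype.ext hg⟩

namespace CategoryTheory.ProjectiveResolution

variable {R : Type*} [CommRing R] {C : Type*} [Category* C] [Abelian C] [Linear R C]
  {X : C} (P : ProjectiveResolution X) (Y : C) (n : ℕ) (s : R)

/-- A scalar kills `Ext^{n+1}`, computed as a derived functor, iff it sends cocycles of a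
projective resolution to coboundaries. -/
lemma forall_smul_Ext_eq_zero_iff [EnoughProjectives C] :
    (∀ x : ((_root_.Ext R C (n + 1)).obj (Opposite.op X)).obj Y, s • x = 0) ↔
      ∀ f : P.complex.X (n + 1) ⟶ Y, P.complex.d (n + 2) (n + 1) ≫ f = 0 →
        ∃ g : P.complex.X n ⟶ Y, P.complex.d (n + 1) n ≫ g = s • f := by
  let K := P.complex.linearYonedaObj R Y
  let e := (P.isoExt (R := R) (n + 1) Y ≪≫
    K.homologyIsoSc' n (n + 1) (n + 2) (by simp) (by simp)).toLinearEquiv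
  have he : (∀ x : ((_root_.Ext R C (n + 1)).obj (Opposite.op X)).obj Y, s • x = 0) ↔
      ∀ x : (K.sc' n (n + 1) (n + 2)).homology, s • x = 0 :=
    ⟨fun h x ↦ by simpa using congrArg e (h (e.symm x)),
      fun h x ↦ e.injective (by simpa using h (e x))⟩
  rw [he, ShortComplex.forall_smul_homology_eq_zero_iff]
  rfl

/-- A scalar kills `Ext^{n+1}`, computed in the derived category, iff it sends cocycles of a
projective resolution to coboundaries. -/
lemma forall_smul_abelianExt_eq_zero_iff [HasExt C] :
    (∀ x : Abelian.Ext X Y (n + 1), s • x = 0) ↔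
      ∀ f : P.complex.X (n + 1) ⟶ Y, P.complex.d (n + 2) (n + 1) ≫ f = 0 →
        ∃ g : P.complex.X n ⟶ Y, P.complex.d (n + 1) n ≫ g = s • f := by
  have key (f : P.complex.X (n + 1) ⟶ Y) (hf : P.complex.d (n + 2) (n + 1) ≫ f = 0) :
      s • P.extMk f (n + 2) rfl hf = 0 ↔
        ∃ g : P.complex.X n ⟶ Y, P.complex.d (n + 1) n ≫ g = s • f := by
    rw [Abelian.Ext.smul_eq_comp_mk₀, extMk_comp_mk₀, P.extMk_eq_zero_iff _ _ _ _ n rfl]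
    simp
  constructor
  · exact fun h f hf ↦ (key f hf).1 (h _)
  · intro h x
    obtain ⟨f, hf, rfl⟩ := P.extMk_surjective x (n + 2) rfl
    exact (key f hf).2 (h f hf)

end CategoryTheory.ProjectiveResolution

section DimensionShifting

variable {R : Type u} [CommRing R] (S : Submonoid R)

lemma unifSTorsion_Ext_iff_abelianExt (M N : ModuleCat.{u} R) (n : ℕ) :
    UnifSTorsion S (((Ext R (ModuleCat.{u} R) (n + 1)).obj (Opposite.op M)).obj N) ↔
      UnifSTorsion S (Abelian.Ext.{u} M N (n + 1)) := by
  simp only [UnifSTorsion, (projectiveResolution M).forall_smul_Ext_eq_zero_iff,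
    (projectiveResolution M).forall_smul_abelianExt_eq_zero_iff]

/-- Dimension shifting along a short exact sequence with projective middle term. -/
lemma unifSTorsion_abelianExt_X₁_of_X₃ {T : ShortComplex (ModuleCat.{u} R)} (hT : T.ShortExact)
    [Projective T.X₂] (N : ModuleCat.{u} R) (n : ℕ)
    (h : UnifSTorsion S (Abelian.Ext.{u} T.X₃ N (n + 2))) :
    UnifSTorsion S (Abelian.Ext.{u} T.X₁ N (n + 1)) := by
  obtain ⟨s, hs, hk⟩ := h
  refine ⟨s, hs, fun x ↦ ?_⟩
  obtain ⟨y, hy⟩ := Abelian.Ext.contravariant_sequence_exact₁ hT N (s • x)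
    (n₁ := n + 2) (by lia) (by rw [Abelian.Ext.comp_smul, hk])
  rw [← hy, y.eq_zero_of_projective, Abelian.Ext.comp_zero]

/-- Iterated dimension shifting: torsion of `Ext^{n+2}` passes to `Ext^1` of the last syzygy. -/
lemma unifSTorsion_abelianExt_syzygy (N : ModuleCat.{u} R) (n : ℕ) (M : ModuleCat.{u} R)
    (h : UnifSTorsion S (Abelian.Ext.{u} M N (n + 2)))
    (F : ℕ → ModuleCat.{u} R) (d : ∀ i : ℕ, F (i + 1) ⟶ F i) (e : F 0 ⟶ M)
    (hinj : Function.Injective ⇑(d n))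
    (hmid : ∀ i : ℕ, i + 1 ≤ n → Function.Exact ⇑(d (i + 1)) ⇑(d i))
    (hexact : Function.Exact ⇑(d 0) ⇑e) (hsurj : Function.Surjective ⇑e)
    (hproj : ∀ i : ℕ, i ≤ n → Projective (F i)) :
    UnifSTorsion S (Abelian.Ext.{u} (F (n + 1)) N 1) := by
  induction n generalizing M F with
  | zero =>
    let T : ShortComplex (ModuleCat.{u} R) :=
      ShortComplex.mk (d 0) e (by ext x; exact hexact.apply_apply_eq_zero x)
    have hT : T.ShortExact := ModuleCat.shortComplex_shortExact T hexact hinj hsurj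
    have : Projective T.X₂ := hproj 0 le_rfl
    exact unifSTorsion_abelianExt_X₁_of_X₃ S hT N 0 h
  | succ n ih =>
    have hT : e.hom.shortComplexKer.ShortExact := LinearMap.shortExact_shortComplexKer hsurj
    have : Projective e.hom.shortComplexKer.X₂ := hproj 0 (by lia)
    refine ih (ModuleCat.of R (LinearMap.ker e.hom))
      (unifSTorsion_abelianExt_X₁_of_X₃ S hT N (n + 1) h) (fun i ↦ F (i + 1))
      (fun i ↦ d (i + 1))
      (ModuleCat.ofHom ((d 0).hom.codRestrict _ fun x ↦ hexact.apply_apply_eq_zero x))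
      hinj (fun i hi ↦ hmid (i + 1) (by lia)) ?_ ?_ (fun i hi ↦ hproj (i + 1) (by lia))
    · intro x
      rw [← hmid 0 (by lia) x]
      exact Subtype.ext_iff
    · rintro ⟨y, hy⟩
      obtain ⟨x, hx⟩ := (hexact y).1 hy
      exact ⟨x, Subtype.ext hx⟩

end DimensionShifting

/-- Suppose `Ext^{n+1}(M, N)` is uniformly `S`-torsion for all `N` (`n ≥ 1`). If
`0 → F_n → ⋯ → F_1 → F_0 → M → 0` is exact with `F_0, …, F_{n-1}` projective, then `F_n`
is `S`-projective, i.e. `Ext^1(F_n, N)` is uniformly `S`-torsion for every `N`. -/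
theorem stmt7 {R : Type u} [CommRing R] (S : Submonoid R) (M : ModuleCat.{u} R)
    (n : ℕ) (hn : 1 ≤ n)
    (hext : ∀ N : ModuleCat.{u} R,
      UnifSTorsion S (((Ext R (ModuleCat.{u} R) (n + 1)).obj (Opposite.op M)).obj N))
    (F : ℕ → ModuleCat.{u} R) (d : ∀ i : ℕ, F (i + 1) ⟶ F i) (e : F 0 ⟶ M)
    (hinj : Function.Injective ⇑(d (n - 1)))
    (hmid : ∀ i : ℕ, i + 2 ≤ n → Function.Exact ⇑(d (i + 1)) ⇑(d i))
    (hexact0 : Function.Exact ⇑(d 0) ⇑e)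
    (hsurj : Function.Surjective ⇑e)
    (hproj : ∀ i : ℕ, i < n → Module.Projective R (F i)) :
    ∀ N : ModuleCat.{u} R,
      UnifSTorsion S (((Ext R (ModuleCat.{u} R) 1).obj (Opposite.op (F n))).obj N) := by
  obtain ⟨n, rfl⟩ : ∃ k, n = k + 1 := ⟨n - 1, by lia⟩
  intro N
  rw [unifSTorsion_Ext_iff_abelianExt S (F (n + 1)) N 0]
  exact unifSTorsion_abelianExt_syzygy S N n M
    ((unifSTorsion_Ext_iff_abelianExt S M N (n + 1)).1 (hext N)) F d e hinj
    (fun i hi ↦ hmid i (by lia)) hexact0 hsurj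
    (fun i hi ↦ (IsProjective.iff_projective (F i)).1 (hproj i (by lia)))
end

section
/- Let R be a commutative ring, S a multiplicative subset of R, M an R-module and n ≥ 0 an integer. If Ext^{n+1}_R(N, M) is uniformly S-torsion for every R-module N, then Ext^{n+k}_R(N, M) is uniformly S-torsion for every R-module N and every integer k ≥ 1. -/
open CategoryTheory

universe u

open Limits

namespace CategoryTheory.ProjectiveResolution

variable {C : Type*} [Category* C] [Abelian C] {X : C}

/-- The first differential of a projective resolution of `X`, as a map onto the first syzygy. -/
noncomputable def toSyzygy (P : ProjectiveResolution X) :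
    P.complex.X 1 ⟶ kernel (P.π.f 0) :=
  kernel.lift (P.π.f 0) (P.complex.d 1 0) P.complex_d_comp_π_f_zero

lemma toSyzygy_ι (P : ProjectiveResolution X) :
    P.toSyzygy ≫ kernel.ι (P.π.f 0) = P.complex.d 1 0 :=
  kernel.lift_ι _ _ _

lemma d_comp_toSyzygy (P : ProjectiveResolution X) : P.complex.d 2 1 ≫ P.toSyzygy = 0 := by
  rw [← cancel_mono (kernel.ι _), Category.assoc, toSyzygy_ι, zero_comp, P.complex.d_comp_d]

lemma exact_toSyzygy (P : ProjectiveResolution X) :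
    (ShortComplex.mk _ _ P.d_comp_toSyzygy).Exact := by
  let φ : ShortComplex.mk _ _ P.d_comp_toSyzygy ⟶
      ShortComplex.mk _ _ (P.complex.d_comp_d 2 1 0) :=
    { τ₁ := 𝟙 _
      τ₂ := 𝟙 _
      τ₃ := kernel.ι (P.π.f 0)
      comm₂₃ := (Category.id_comp _).trans P.toSyzygy_ι.symm }
  have : Epi φ.τ₁ := inferInstanceAs (Epi (𝟙 _))
  have : IsIso φ.τ₂ := inferInstanceAs (IsIso (𝟙 _))
  have : Mono φ.τ₃ := inferInstanceAs (Mono (kernel.ι _))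
  exact (ShortComplex.exact_iff_of_epi_of_isIso_of_mono φ).2 (P.exact_succ 0)

lemma epi_toSyzygy (P : ProjectiveResolution X) : Epi P.toSyzygy :=
  P.exact₀.epi_kernelLift

/-- Dropping the degree zero term of a projective resolution of `X` gives a projective resolution
of the first syzygy of `X`. -/
noncomputable def truncate (P : ProjectiveResolution X) :
    ProjectiveResolution (kernel (P.π.f 0)) where
  complex := ChainComplex.truncate.obj P.complex
  projective n := P.projective (n + 1)
  π := (ChainComplex.toSingle₀Equiv _ _).symm ⟨P.toSyzygy, P.d_comp_toSyzygy⟩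
  quasiIso := ⟨fun n => by
    cases n with
    | zero =>
      rw [ChainComplex.quasiIsoAt₀_iff, ShortComplex.quasiIso_iff_of_zeros']
      · refine (ShortComplex.exact_and_epi_g_iff_of_iso ?_).2 ⟨P.exact_toSyzygy, P.epi_toSyzygy⟩
        exact ShortComplex.isoMk (Iso.refl _) (Iso.refl _) (Iso.refl _)
          ((Category.id_comp _).trans (Category.comp_id _).symm)
          ((Category.id_comp _).trans ((Category.comp_id _).trans
            (ChainComplex.toSingle₀Equiv_symm_apply_f_zero
              (C := ChainComplex.truncate.obj P.complex) P.toSyzygy P.d_comp_toSyzygy)).symm)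
      · exact (ChainComplex.truncate.obj P.complex).shape 0 0 (by simp)
      all_goals rfl
    | succ n =>
      rw [quasiIsoAt_iff_exactAt']
      · rw [HomologicalComplex.exactAt_iff' _ (n + 2) (n + 1) n (by simp) (by simp)]
        exact P.exact_succ (n + 1)
      · apply ChainComplex.exactAt_succ_single_obj⟩

end CategoryTheory.ProjectiveResolution

/-- Dimension shifting along the first syzygy of a projective resolution. -/
noncomputable def extSuccIsoExtKernel {R : Type*} [Ring R] {C : Type*} [Category* C] [Abelian C]
    [Linear R C] [EnoughProjectives C] {X : C} (P : ProjectiveResolution X) (Y : C) (m : ℕ) :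
    ((Ext R C (m + 2)).obj (Opposite.op X)).obj Y ≅
      ((Ext R C (m + 1)).obj (Opposite.op (kernel (P.π.f 0)))).obj Y :=
  P.isoExt (m + 2) Y ≪≫
    ShortComplex.homologyMapIso
      ((P.complex.linearYonedaObj R Y).isoSc' (m + 1) (m + 2) (m + 3) (by simp) (by simp)) ≪≫
    (ShortComplex.homologyMapIso
      ((P.truncate.complex.linearYonedaObj R Y).isoSc' m (m + 1) (m + 2)
        (by simp) (by simp))).symm ≪≫
    (P.truncate.isoExt (m + 1) Y).symm

lemma UnifSTorsion.of_iso {R : Type u} [CommRing R] {S : Submonoid R} {M N : ModuleCat R}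
    (e : M ≅ N) (h : UnifSTorsion S N) : UnifSTorsion S M := by
  obtain ⟨s, hs, hN⟩ := h
  exact ⟨s, hs, fun m => e.toLinearEquiv.injective (by simp only [map_smul, map_zero, hN])⟩

/-- If `Ext^{n+1}(N, M)` is uniformly `S`-torsion for every `N`, then so is
`Ext^{n+k}(N, M)` for every `N` and every `k ≥ 1`. -/
theorem stmt9 {R : Type u} [CommRing R] (S : Submonoid R) (M : ModuleCat.{u} R) (n : ℕ)
    (h : ∀ N : ModuleCat.{u} R,
      UnifSTorsion S (((Ext R (ModuleCat.{u} R) (n + 1)).obj (Opposite.op N)).obj M)) :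
    ∀ (N : ModuleCat.{u} R) (k : ℕ), 1 ≤ k →
      UnifSTorsion S (((Ext R (ModuleCat.{u} R) (n + k)).obj (Opposite.op N)).obj M) := by
  intro N k hk
  induction k, hk using Nat.le_induction generalizing N with
  | base => exact h N
  | succ k hk ih =>
    obtain ⟨k, rfl⟩ := Nat.exists_eq_add_of_le' hk
    exact UnifSTorsion.of_iso (extSuccIsoExtKernel (ProjectiveResolution.of N) M (n + k)) (ih _)
end

section
/- Let R be a commutative ring, S a multiplicative subset of R, M an R-module and n ≥ 1 an integer such that Ext^{n+1}_R(N, M) is uniformly S-torsion for every R-module N. If 0 → M → E^0 → E^1 → ⋯ → E^{n-1} → E^n → 0 is an exact sequence of R-modules in which E^0, E^1, …, E^{n-1} are injective, then E^n is S-injective. -/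
open CategoryTheory

universe u

/-- A linear equivalence preserves the scalars that annihilate a module. -/
lemma LinearEquiv.forall_smul_eq_zero_iff {R A B : Type*} [CommRing R] [AddCommGroup A] [Module R A]
    [AddCommGroup B] [Module R B] (φ : A ≃ₗ[R] B) (s : R) :
    (∀ a : A, s • a = 0) ↔ ∀ b : B, s • b = 0 := by
  refine ⟨fun h b => ?_, fun h a => ?_⟩
  · simpa [h] using (φ.map_smul s (φ.symm b)).symm
  · simpa [h] using (φ.symm.map_smul s (φ a)).symm

namespace CategoryTheory

/-- A scalar annihilates the homology of a short complex of modules exactly when it maps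
cycles to boundaries. -/
lemma ShortComplex.forall_smul_homology_eq_zero_iff_s10 {R : Type u} [CommRing R]
    (T : ShortComplex (ModuleCat.{u} R)) (s : R) :
    (∀ x : T.homology, s • x = 0) ↔ ∀ f : T.X₂, T.g f = 0 → ∃ g : T.X₁, T.f g = s • f := by
  rw [T.moduleCatHomologyIso.toLinearEquiv.forall_smul_eq_zero_iff s]
  constructor
  · intro h f hf
    obtain ⟨g, hg⟩ := (Submodule.Quotient.mk_eq_zero _).1 (h (Submodule.Quotient.mk ⟨f, hf⟩))
    exact ⟨g, congrArg Subtype.val hg⟩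
  · intro h x
    obtain ⟨⟨f, hf⟩, rfl⟩ := Submodule.Quotient.mk_surjective _ x
    obtain ⟨g, hg⟩ := h f hf
    exact (Submodule.Quotient.mk_eq_zero _).2 ⟨g, Subtype.ext hg⟩

namespace ProjectiveResolution

variable {R : Type u} [CommRing R] {N : ModuleCat.{u} R}

/-- A scalar annihilates `Ext^{m+1}(N, Y)` exactly when its multiple of every `(m+1)`-cocycle on a
projective resolution of `N` is a coboundary. -/
lemma forall_smul_ext_eq_zero_iff (P : ProjectiveResolution N) (s : R) (m : ℕ)
    (Y : ModuleCat.{u} R) :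
    (∀ x : ((Ext R (ModuleCat.{u} R) (m + 1)).obj (Opposite.op N)).obj Y, s • x = 0) ↔
      ∀ f : P.complex.X (m + 1) ⟶ Y, P.complex.d (m + 2) (m + 1) ≫ f = 0 →
        ∃ g : P.complex.X m ⟶ Y, P.complex.d (m + 1) m ≫ g = s • f := by
  let K := P.complex.linearYonedaObj R Y
  let φ := P.isoExt (R := R) (m + 1) Y ≪≫
    K.homologyIsoSc' m (m + 1) (m + 2) (by simp) (by simp)
  rw [φ.toLinearEquiv.forall_smul_eq_zero_iff s]
  exact (K.sc' m (m + 1) (m + 2)).forall_smul_homology_eq_zero_iff_s10 s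

/-- Dimension shifting along `0 → A → I → B → 0` with `I` injective, for the annihilators
of `Ext`. -/
lemma forall_smul_ext_eq_zero_of_shortExact (P : ProjectiveResolution N) (s : R) (m : ℕ)
    {A I B : ModuleCat.{u} R} [Injective I] {i : A ⟶ I} {p : I ⟶ B}
    (hi : Function.Injective ⇑i) (hip : Function.Exact ⇑i ⇑p) (hp : Function.Surjective ⇑p)
    (h : ∀ x : ((Ext R (ModuleCat.{u} R) (m + 2)).obj (Opposite.op N)).obj A, s • x = 0) :
    ∀ x : ((Ext R (ModuleCat.{u} R) (m + 1)).obj (Opposite.op N)).obj B, s • x = 0 := by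
  rw [P.forall_smul_ext_eq_zero_iff] at h ⊢
  intro f hf
  have : Mono i := (ModuleCat.mono_iff_injective i).2 hi
  have : Epi p := (ModuleCat.epi_iff_surjective p).2 hp
  have w : i ≫ p = 0 := ModuleCat.hom_ext (LinearMap.ext hip.apply_apply_eq_zero)
  have hT : (ShortComplex.mk i p w).Exact :=
    (ShortComplex.ShortExact.moduleCat_exact_iff_function_exact _).2 hip
  let F := Projective.factorThru f p
  have hF : F ≫ p = f := Projective.factorThru_comp f p
  let c := hT.lift (P.complex.d (m + 2) (m + 1) ≫ F) (by simp [hF, hf])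
  have hc : c ≫ i = P.complex.d (m + 2) (m + 1) ≫ F := hT.lift_f _ _
  obtain ⟨k, hk⟩ := h c (by simp [← cancel_mono i, hc])
  have hz : P.complex.d (m + 2) (m + 1) ≫ (s • F - k ≫ i) = 0 := by
    rw [Preadditive.comp_sub, ← Category.assoc, hk, Linear.smul_comp, hc, Linear.comp_smul,
      sub_self]
  refine ⟨(P.exact_succ m).descToInjective _ hz ≫ p, ?_⟩
  have hd : P.complex.d (m + 1) m ≫ (P.exact_succ m).descToInjective _ hz = s • F - k ≫ i :=
    (P.exact_succ m).comp_descToInjective _ hz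
  rw [← Category.assoc, hd]
  simp [hF, w]

/-- Iterated dimension shifting along an exact sequence `0 → M → E 0 → ⋯ → E (n + 1) → 0` whose
terms `E 0, …, E n` are injective. -/
lemma forall_smul_ext_eq_zero_of_exact (P : ProjectiveResolution N) (s : R) (n : ℕ)
    (M : ModuleCat.{u} R) (E : ℕ → ModuleCat.{u} R) (e : M ⟶ E 0) (d : ∀ i : ℕ, E i ⟶ E (i + 1))
    (hinj : Function.Injective ⇑e) (hexact : Function.Exact ⇑e ⇑(d 0))
    (hmid : ∀ i : ℕ, i < n → Function.Exact ⇑(d i) ⇑(d (i + 1)))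
    (hsurj : Function.Surjective ⇑(d n)) (hE : ∀ i : ℕ, i ≤ n → Injective (E i))
    (h : ∀ x : ((Ext R (ModuleCat.{u} R) (n + 2)).obj (Opposite.op N)).obj M, s • x = 0) :
    ∀ x : ((Ext R (ModuleCat.{u} R) 1).obj (Opposite.op N)).obj (E (n + 1)), s • x = 0 := by
  have := hE 0 (Nat.zero_le n)
  induction n generalizing M E with
  | zero => exact P.forall_smul_ext_eq_zero_of_shortExact s 0 hinj hexact hsurj h
  | succ n ih =>
    let p : E 0 ⟶ ModuleCat.of R (LinearMap.range (d 0).hom) :=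
      ModuleCat.ofHom (d 0).hom.rangeRestrict
    have hep : Function.Exact ⇑e ⇑p := fun x =>
      ⟨fun hx => (hexact x).1 (congrArg Subtype.val hx),
        fun hx => Subtype.ext ((hexact x).2 hx)⟩
    have hp : Function.Surjective ⇑p := (d 0).hom.surjective_rangeRestrict
    refine ih (ModuleCat.of R (LinearMap.range (d 0).hom)) (fun i => E (i + 1))
      (ModuleCat.ofHom (LinearMap.range (d 0).hom).subtype) (fun i => d (i + 1))
      Subtype.val_injective (fun x => ?_) (fun i hi => hmid (i + 1) (by lia)) hsurj
      (fun i hi => hE (i + 1) (by lia)) (P.forall_smul_ext_eq_zero_of_shortExact s (n + 1) hinj hep hp h)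
      (hE 1 (by lia))
    rw [hmid 0 (by lia) x]
    exact ⟨fun ⟨y, hy⟩ => ⟨⟨x, y, hy⟩, rfl⟩, fun ⟨⟨_, y, hy⟩, hz⟩ => ⟨y, hy.trans hz⟩⟩

end ProjectiveResolution

end CategoryTheory

/-- Suppose `Ext^{n+1}(N, M)` is uniformly `S`-torsion for all `N` (`n ≥ 1`). If
`0 → M → E^0 → ⋯ → E^{n-1} → E^n → 0` is exact with `E^0, …, E^{n-1}` injective, then `E^n`
is `S`-injective, i.e. `Ext^1(N, E^n)` is uniformly `S`-torsion for every `N`. -/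
theorem stmt10 {R : Type u} [CommRing R] (S : Submonoid R) (M : ModuleCat.{u} R)
    (n : ℕ) (hn : 1 ≤ n)
    (hext : ∀ N : ModuleCat.{u} R,
      UnifSTorsion S (((Ext R (ModuleCat.{u} R) (n + 1)).obj (Opposite.op N)).obj M))
    (E : ℕ → ModuleCat.{u} R) (e : M ⟶ E 0) (d : ∀ i : ℕ, E i ⟶ E (i + 1))
    (hinj : Function.Injective ⇑e)
    (hexact0 : Function.Exact ⇑e ⇑(d 0))
    (hmid : ∀ i : ℕ, i + 2 ≤ n → Function.Exact ⇑(d i) ⇑(d (i + 1)))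
    (hsurj : Function.Surjective ⇑(d (n - 1)))
    (hinjmod : ∀ i : ℕ, i < n → Module.Injective R (E i)) :
    ∀ N : ModuleCat.{u} R,
      UnifSTorsion S (((Ext R (ModuleCat.{u} R) 1).obj (Opposite.op N)).obj (E n)) := by
  intro N
  obtain ⟨n, rfl⟩ := Nat.exists_eq_add_of_le' hn
  obtain ⟨s, hs, h⟩ := hext N
  exact ⟨s, hs, (projectiveResolution N).forall_smul_ext_eq_zero_of_exact s n M E e d hinj hexact0
    (fun i hi => hmid i (by lia)) hsurj
    (fun i hi => (Module.injective_iff_injective_object R (E i)).1 (hinjmod i (by lia))) h⟩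
end

section
/- Let R be a commutative ring, S a multiplicative subset of R, 0 → A → B → C → 0 an S-exact sequence of R-modules and n ≥ 0 an integer. If Ext^{n+1}_R(N, B) and Ext^{n+1}_R(N, C) are uniformly S-torsion for every R-module N, then Ext^{n+2}_R(N, A) is uniformly S-torsion for every R-module N. (That is, the S-injective dimension of A is at most 1 + max{S-id_R(B), S-id_R(C)}.) -/
open CategoryTheory

universe u

lemma LinearEquiv.forall_smul_eq_zero_iff_s12 {R M M' : Type*} [Semiring R] [AddCommMonoid M]
    [AddCommMonoid M'] [Module R M] [Module R M'] (e : M ≃ₗ[R] M') (s : R) :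
    (∀ m : M, s • m = 0) ↔ ∀ m : M', s • m = 0 :=
  ⟨fun h m ↦ by rw [← e.apply_symm_apply m, ← map_smul, h, map_zero],
    fun h m ↦ by rw [← e.symm_apply_apply m, ← map_smul, h, map_zero]⟩

lemma Submodule.forall_smul_quotient_eq_zero_iff {R M : Type*} [Ring R] [AddCommGroup M]
    [Module R M] (p : Submodule R M) (s : R) :
    (∀ m : M ⧸ p, s • m = 0) ↔ ∀ x : M, s • x ∈ p := by
  simp_rw [(Submodule.Quotient.mk_surjective p).forall, ← Submodule.Quotient.mk_smul,
    Submodule.Quotient.mk_eq_zero]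

lemma CategoryTheory.ShortComplex.moduleCat_smul_homology_eq_zero_iff {R : Type*} [Ring R]
    (T : ShortComplex (ModuleCat R)) (s : R) :
    (∀ m : T.homology, s • m = 0) ↔ ∀ x : T.X₂, T.g x = 0 → ∃ y : T.X₁, T.f y = s • x := by
  refine (T.moduleCatHomologyIso.toLinearEquiv.forall_smul_eq_zero_iff_s12 s).trans
    ((Submodule.forall_smul_quotient_eq_zero_iff T.moduleCatToCycles.range s).trans ?_)
  refine ⟨fun h x hx ↦ ?_, fun h x ↦ ?_⟩
  · obtain ⟨y, hy⟩ := h ⟨x, hx⟩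
    exact ⟨y, congrArg Subtype.val hy⟩
  · obtain ⟨y, hy⟩ := h x.1 x.2
    exact ⟨y, Subtype.ext hy⟩

/-- Uniform `S`-torsion of `Ext^{k+1}(N, M)` in terms of cochains on a projective resolution. -/
lemma unifSTorsion_ext_iff {R : Type u} [CommRing R] (S : Submonoid R) {N : ModuleCat.{u} R}
    (P : ProjectiveResolution N) (M : ModuleCat.{u} R) (k : ℕ) :
    UnifSTorsion S (((Ext R (ModuleCat.{u} R) (k + 1)).obj (Opposite.op N)).obj M) ↔
      ∃ s ∈ S, ∀ φ : P.complex.X (k + 1) ⟶ M, P.complex.d (k + 2) (k + 1) ≫ φ = 0 →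
        ∃ ψ : P.complex.X k ⟶ M, P.complex.d (k + 1) k ≫ ψ = s • φ := by
  let K := P.complex.linearYonedaObj R M
  let e := (P.isoExt (R := R) (k + 1) M ≪≫
    K.homologyIsoSc' k (k + 1) (k + 2) (by simp) (by simp)).toLinearEquiv
  exact exists_congr fun s ↦ and_congr_right fun _ ↦ (e.forall_smul_eq_zero_iff_s12 s).trans
    (ShortComplex.moduleCat_smul_homology_eq_zero_iff (K.sc' k (k + 1) (k + 2)) s)

/-- Deleting the degree-zero term of a projective resolution yields a projective resolution of
the first syzygy. -/
noncomputable def CategoryTheory.ProjectiveResolution.syzygy {C : Type*} [Category* C] [Abelian C]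
    {N : C} (P : ProjectiveResolution N) :
    ProjectiveResolution (Limits.cokernel (P.complex.d 2 1)) where
  complex := ChainComplex.truncate.obj P.complex
  projective n := P.projective (n + 1)
  π := (ChainComplex.toSingle₀Equiv _ _).symm ⟨Limits.cokernel.π (P.complex.d 2 1),
    Limits.cokernel.condition _⟩
  quasiIso := ⟨fun n ↦ by
    cases n with
    | zero =>
      rw [ChainComplex.quasiIsoAt₀_iff, ShortComplex.quasiIso_iff_of_zeros']
      · refine (ShortComplex.exact_and_epi_g_iff_of_iso ?_).2
          ⟨ShortComplex.exact_cokernel (P.complex.d 2 1),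
            inferInstanceAs (Epi (Limits.cokernel.π _))⟩
        refine ShortComplex.isoMk (Iso.refl _) (Iso.refl _) (Iso.refl _) ?_ ?_
        · exact (Category.id_comp _).trans (Category.comp_id _).symm
        · refine (Category.id_comp _).trans (Eq.trans ?_ (Category.comp_id _).symm)
          exact (ChainComplex.toSingle₀Equiv_symm_apply_f_zero
            (C := ChainComplex.truncate.obj P.complex) _ (Limits.cokernel.condition _)).symm
      · exact P.complex.shape _ _ (by simp)
      all_goals rfl
    | succ n =>
      rw [quasiIsoAt_iff_exactAt' _ _ (ChainComplex.exactAt_succ_single_obj _ _),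
        HomologicalComplex.exactAt_iff' _ (n + 2) (n + 1) n (by simp) (by simp)]
      exact P.exact_succ (n + 1)⟩

lemma unifSTorsion_ext_succ {R : Type u} [CommRing R] (S : Submonoid R) {M : ModuleCat.{u} R}
    {n : ℕ} (h : ∀ N : ModuleCat.{u} R,
      UnifSTorsion S (((Ext R (ModuleCat.{u} R) (n + 1)).obj (Opposite.op N)).obj M))
    (N : ModuleCat.{u} R) :
    UnifSTorsion S (((Ext R (ModuleCat.{u} R) (n + 2)).obj (Opposite.op N)).obj M) :=
  let P := ProjectiveResolution.of N
  (unifSTorsion_ext_iff S P M (n + 1)).2 ((unifSTorsion_ext_iff S P.syzygy M n).1 (h _))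

lemma ModuleCat.exists_comp_eq_of_projective {R : Type u} [Ring R] {P M M' : ModuleCat.{u} R}
    [Projective P] (g : M ⟶ M') (χ : P ⟶ M') (h : ∀ p : P, ∃ m : M, χ p = g m) :
    ∃ χ' : P ⟶ M, χ' ≫ g = χ := by
  have : Module.Projective R P := (IsProjective.iff_projective P).2 inferInstance
  obtain ⟨l, hl⟩ := Module.projective_lifting_property g.hom.rangeRestrict
    (χ.hom.codRestrict g.hom.range fun p ↦ (h p).imp fun _ ↦ Eq.symm)
    g.hom.surjective_rangeRestrict
  refine ⟨ModuleCat.ofHom l, ModuleCat.hom_ext (LinearMap.ext fun p ↦ ?_)⟩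
  exact congrArg Subtype.val (LinearMap.congr_fun hl p)

/-- Given an `S`-exact sequence `0 → A → B → C → 0`, if `Ext^{n+1}(N, B)` and
`Ext^{n+1}(N, C)` are uniformly `S`-torsion for all `N`, then `Ext^{n+2}(N, A)` is
uniformly `S`-torsion for all `N` (so `S`-id A ≤ 1 + max{`S`-id B, `S`-id C}). -/
theorem stmt12 {R : Type u} [CommRing R] (S : Submonoid R)
    {A B C : ModuleCat.{u} R} (f : A ⟶ B) (g : B ⟶ C)
    (hA : ∃ s ∈ S, ∀ x : A, f x = 0 → s • x = (0 : A))
    (hB : SExactAt S (⇑f) (⇑g))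
    (hC : ∃ s ∈ S, ∀ c : C, ∃ b : B, s • c = g b)
    (n : ℕ)
    (hBid : ∀ N : ModuleCat.{u} R,
      UnifSTorsion S (((Ext R (ModuleCat.{u} R) (n + 1)).obj (Opposite.op N)).obj B))
    (hCid : ∀ N : ModuleCat.{u} R,
      UnifSTorsion S (((Ext R (ModuleCat.{u} R) (n + 1)).obj (Opposite.op N)).obj C)) :
    ∀ N : ModuleCat.{u} R,
      UnifSTorsion S (((Ext R (ModuleCat.{u} R) (n + 2)).obj (Opposite.op N)).obj A) := by
  intro N
  obtain ⟨a, ha, hA⟩ := hA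
  obtain ⟨b, hb, hBker, hBim⟩ := hB
  obtain ⟨c, hc, hC⟩ := hC
  let P := ProjectiveResolution.of N
  obtain ⟨s, hs, hBid⟩ := (unifSTorsion_ext_iff S P B (n + 1)).1 (unifSTorsion_ext_succ S hBid N)
  obtain ⟨t, ht, hCid⟩ := (unifSTorsion_ext_iff S P C n).1 (hCid N)
  have hfg : b • (f ≫ g) = 0 := by
    ext x
    exact (map_smul g.hom b (f x)).symm.trans (hBim x)
  refine (unifSTorsion_ext_iff S P A (n + 1)).2 ⟨a * (b * (c * (t * (b * s)))),
    S.mul_mem ha (S.mul_mem hb (S.mul_mem hc (S.mul_mem ht (S.mul_mem hb hs)))), fun φ hφ ↦ ?_⟩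
  obtain ⟨ψ, hψ⟩ := hBid (φ ≫ f) (by rw [reassoc_of% hφ, Limits.zero_comp])
  obtain ⟨χ, hχ⟩ := hCid (b • (ψ ≫ g)) (by
    rw [Linear.comp_smul, reassoc_of% hψ, Linear.smul_comp, Category.assoc, smul_comm,
      ← Linear.comp_smul, hfg, Limits.comp_zero, smul_zero])
  obtain ⟨χ', hχ'⟩ := ModuleCat.exists_comp_eq_of_projective g (c • χ) fun p ↦ hC (χ p)
  let ψ' := (c * (t * b)) • ψ - P.complex.d (n + 1) n ≫ χ'
  have hψ' : ψ' ≫ g = 0 := by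
    simp only [ψ', Preadditive.sub_comp, Linear.smul_comp, Category.assoc, hχ', Linear.comp_smul,
      hχ, smul_smul, sub_self]
  obtain ⟨θ, hθ⟩ := ModuleCat.exists_comp_eq_of_projective f (b • ψ')
    fun p ↦ hBker (ψ' p) (ConcreteCategory.congr_hom hψ' p)
  have hdiff : (P.complex.d (n + 2) (n + 1) ≫ θ - (b * (c * (t * (b * s)))) • φ) ≫ f = 0 := by
    simp only [ψ', Preadditive.sub_comp, Category.assoc, hθ, Linear.comp_smul, Linear.smul_comp,
      Preadditive.comp_sub, hψ, HomologicalComplex.d_comp_d_assoc, Limits.zero_comp, sub_zero,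
      smul_smul, mul_assoc, sub_self]
  refine ⟨a • θ, ?_⟩
  rw [Linear.comp_smul, mul_smul, ← sub_eq_zero, ← smul_sub]
  ext x
  exact hA _ (ConcreteCategory.congr_hom hdiff x)
end

section
/- Let R be a commutative ring, M an R-module and n ≥ 0 an integer. Then Ext^{n+1}_R(M, N) = 0 for every R-module N if and only if for every maximal ideal 𝔪 of R and every R-module N there exists s ∈ R ∖ 𝔪 such that s·Ext^{n+1}_R(M, N) = 0. (That is, pd_R(M) = sup{(R∖𝔪)-pd_R(M) : 𝔪 ∈ Max(R)}.) -/
open CategoryTheory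

universe u

/-- An element of a module vanishes if every maximal ideal misses some scalar killing it. -/
theorem eq_zero_of_forall_isMaximal_exists_smul_eq_zero {R E : Type*} [CommRing R]
    [AddCommGroup E] [Module R E] (x : E)
    (h : ∀ 𝔪 : Ideal R, 𝔪.IsMaximal → ∃ s : R, s ∉ 𝔪 ∧ s • x = 0) : x = 0 := by
  by_contra hx
  have hne : Ideal.torsionOf R E x ≠ ⊤ := fun htop =>
    hx ((Ideal.torsionOf_eq_top_iff R x).mp htop)
  obtain ⟨𝔪, h𝔪, hle⟩ := Ideal.exists_le_maximal _ hne
  obtain ⟨s, hs, hsx⟩ := h 𝔪 h𝔪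
  exact hs (hle ((Ideal.mem_torsionOf_iff x s).mpr hsx))

/-- `Ext^{n+1}_R(M, N)` vanishes for every `N` iff for every maximal ideal `𝔪` and every `N`
some `s ∈ R ∖ 𝔪` kills `Ext^{n+1}_R(M, N)`; i.e. `pd_R(M) = sup { (R∖𝔪)-pd_R(M) }`. -/
theorem stmt14 {R : Type u} [CommRing R] (M : ModuleCat.{u} R) (n : ℕ) :
    (∀ N : ModuleCat.{u} R,
        ∀ x : ((Ext R (ModuleCat.{u} R) (n + 1)).obj (Opposite.op M)).obj N, x = 0) ↔
      (∀ 𝔪 : Ideal R, 𝔪.IsMaximal → ∀ N : ModuleCat.{u} R,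
        ∃ s : R, s ∉ 𝔪 ∧
          ∀ x : ((Ext R (ModuleCat.{u} R) (n + 1)).obj (Opposite.op M)).obj N,
            s • x = 0) := by
  constructor
  · intro h 𝔪 h𝔪 N
    exact ⟨1, (Ideal.ne_top_iff_one 𝔪).mp h𝔪.ne_top, fun x => by rw [h N x, smul_zero]⟩
  · intro h N x
    refine eq_zero_of_forall_isMaximal_exists_smul_eq_zero (R := R) x fun 𝔪 h𝔪 => ?_
    obtain ⟨s, hs, hkill⟩ := h 𝔪 h𝔪 N
    exact ⟨s, hs, hkill x⟩
end

section
/- Let R be a commutative ring, S a multiplicative subset of R, and a ∈ R a non-zero-divisor that does not divide any element of S. Then the R-module R/aR is not S-projective, while Ext^{k}_R(R/aR, N) = 0 for every R-module N and every k ≥ 2; consequently S-pd_R(R/aR) = 1. -/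
open CategoryTheory

universe u

namespace CategoryTheory.ShortComplex.ShortExact

open Limits

variable {C : Type*} [Category* C] [Abelian C]

/-- The chain complex `⋯ ⟶ 0 ⟶ X₁ ⟶ X₂` attached to a short complex `X₁ ⟶ X₂ ⟶ X₃`. -/
noncomputable def twoTermComplex (T : ShortComplex C) : ChainComplex C ℕ :=
  ((ChainComplex.single₀ C).obj T.X₁).augment T.f zero_comp

lemma isZero_twoTermComplex_X (T : ShortComplex C) (n : ℕ) :
    IsZero ((twoTermComplex T).X (n + 2)) :=
  HomologicalComplex.isZero_single_obj_X (ComplexShape.down ℕ) 0 T.X₁ (n + 1) (by simp)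

/-- A short exact sequence `0 ⟶ X₁ ⟶ X₂ ⟶ X₃ ⟶ 0` with `X₁` and `X₂` projective is a projective
resolution of `X₃`. -/
noncomputable def projectiveResolution {T : ShortComplex C} (hT : T.ShortExact)
    [h₁ : Projective T.X₁] [h₂ : Projective T.X₂] : ProjectiveResolution T.X₃ where
  complex := twoTermComplex T
  projective
    | 0 => h₂
    | 1 => h₁
    | n + 2 => (isZero_twoTermComplex_X T n).projective
  π := (ChainComplex.toSingle₀Equiv _ _).symm ⟨T.g, T.zero⟩
  quasiIso := ⟨fun n => by
    match n with
    | 0 =>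
      rw [ChainComplex.quasiIsoAt₀_iff, ShortComplex.quasiIso_iff_of_zeros']
      · refine (ShortComplex.exact_and_epi_g_iff_of_iso ?_).2 ⟨hT.exact, hT.epi_g⟩
        exact ShortComplex.isoMk (Iso.refl _) (Iso.refl _) (Iso.refl _)
          ((Category.id_comp _).trans (Category.comp_id _).symm)
          ((Category.id_comp _).trans
            ((ChainComplex.toSingle₀Equiv_symm_apply_f_zero (C := twoTermComplex T)
              T.g T.zero).symm.trans (Category.comp_id _).symm))
      all_goals rfl
    | 1 =>
      rw [quasiIsoAt_iff_exactAt' _ _ (ChainComplex.exactAt_succ_single_obj _ _),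
        HomologicalComplex.exactAt_iff' _ 2 1 0 (by simp) (by simp)]
      exact (ShortComplex.exact_iff_mono _
        ((isZero_twoTermComplex_X T 0).eq_of_src _ _)).2 hT.mono_f
    | n + 2 =>
      rw [quasiIsoAt_iff_exactAt' _ _ (ChainComplex.exactAt_succ_single_obj _ _)]
      exact ShortComplex.exact_of_isZero_X₂ _ (isZero_twoTermComplex_X T n)⟩

lemma isZero_Ext_add_two {A : Type*} [Ring A] [Linear A C] [EnoughProjectives C]
    {T : ShortComplex C} (hT : T.ShortExact) [Projective T.X₁] [Projective T.X₂] (n : ℕ) (Y : C) :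
    IsZero (((Ext A C (n + 2)).obj (Opposite.op T.X₃)).obj Y) := by
  refine IsZero.of_iso ?_ (hT.projectiveResolution.isoExt (n + 2) Y)
  rw [← HomologicalComplex.exactAt_iff_isZero_homology, HomologicalComplex.exactAt_iff]
  refine ShortComplex.exact_of_isZero_X₂ _ ?_
  rw [IsZero.iff_id_eq_zero]
  ext (x : _ ⟶ _)
  obtain rfl : x = 0 := (isZero_twoTermComplex_X T n).eq_of_src _ _
  rfl

end CategoryTheory.ShortComplex.ShortExact

lemma HomologicalComplex.exists_d_eq_smul_of_smul_homology_eq_zero {R : Type*} [CommRing R]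
    {ι : Type*} {c : ComplexShape ι} (K : HomologicalComplex (ModuleCat R) c) {i j k : ι}
    (hij : c.prev j = i) (hjk : c.next j = k) {s : R} (hs : ∀ x : K.homology j, s • x = 0)
    (z : K.X j) (hz : K.d j k z = 0) : ∃ y : K.X i, K.d i j y = s • z := by
  let w : K.cycles j := K.cyclesMk z k hjk hz
  have hw : K.iCycles j w = z := K.i_cyclesMk z k hjk hz
  have hπ : K.homologyπ j (s • w) = 0 := by rw [map_smul, hs]
  have hexact : (ShortComplex.mk (K.toCycles i j) (K.homologyπ j) (by simp)).Exact :=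
    ShortComplex.exact_of_g_is_cokernel _ (K.homologyIsCokernel i j hij)
  obtain ⟨y, hy⟩ : ∃ y : K.X i, K.toCycles i j y = s • w :=
    (ShortComplex.moduleCat_exact_iff _).1 hexact (s • w) hπ
  refine ⟨y, ?_⟩
  rw [← K.toCycles_i i j, ConcreteCategory.comp_apply, hy, map_smul, hw]

lemma CategoryTheory.ShortComplex.ShortExact.exists_comp_eq_smul_of_smul_Ext_one_eq_zero
    {A : Type*} [CommRing A] {C : Type*} [Category* C] [Abelian C] [Linear A C]
    [EnoughProjectives C] {T : ShortComplex C} (hT : T.ShortExact) [Projective T.X₁]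
    [Projective T.X₂] {Y : C} {s : A}
    (hs : ∀ x : ((Ext A C 1).obj (Opposite.op T.X₃)).obj Y, s • x = 0) (f : T.X₁ ⟶ Y) :
    ∃ g : T.X₂ ⟶ Y, T.f ≫ g = s • f := by
  let e := hT.projectiveResolution.isoExt (R := A) 1 Y
  refine HomologicalComplex.exists_d_eq_smul_of_smul_homology_eq_zero
    (hT.projectiveResolution.complex.linearYonedaObj A Y) (i := 0) (j := 1) (k := 2)
    (by simp) (by simp) (fun y => ?_) f
    ((isZero_twoTermComplex_X T 0).eq_of_src _ _)
  rw [← e.inv_hom_id_apply y, ← map_smul, hs, map_zero]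

/-- The short complex `R ⟶ R ⟶ R/aR` whose first map is multiplication by `a`. -/
noncomputable def quotientSpanSingletonShortComplex {R : Type u} [CommRing R] (a : R) :
    ShortComplex (ModuleCat.{u} R) :=
  ShortComplex.mk (X₁ := ModuleCat.of R R) (X₂ := ModuleCat.of R R)
    (X₃ := ModuleCat.of R (R ⧸ Ideal.span {a}))
    (ModuleCat.ofHom (LinearMap.mulLeft R a)) (ModuleCat.ofHom (Ideal.span {a}).mkQ) (by ext; simp)

lemma quotientSpanSingletonShortComplex_shortExact {R : Type u} [CommRing R] {a : R}
    (ha : a ∈ nonZeroDivisors R) : (quotientSpanSingletonShortComplex a).ShortExact where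
  exact := by
    rw [ShortComplex.moduleCat_exact_iff]
    intro (x : R) hx
    obtain ⟨r, rfl⟩ := Ideal.mem_span_singleton.1 ((Submodule.Quotient.mk_eq_zero _).1 hx)
    exact ⟨r, rfl⟩
  mono_f := (ModuleCat.mono_iff_injective _).2 fun x y h =>
    mul_cancel_left_mem_nonZeroDivisors ha |>.1 h
  epi_g := (ModuleCat.epi_iff_surjective _).2 (Submodule.mkQ_surjective _)

/-- If `a` is a non-zero-divisor of `R` which divides no element of `S`, then `R/aR` is not
`S`-projective (its first Ext is not uniformly `S`-torsion against all modules), while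
`Ext^k_R(R/aR, N) = 0` for all `N` and `k ≥ 2`; hence `S`-pd`_R(R/aR) = 1`. -/
theorem stmt15 {R : Type u} [CommRing R] (S : Submonoid R) (a : R)
    (ha : a ∈ nonZeroDivisors R) (hdvd : ∀ s ∈ S, ¬ a ∣ s) :
    (¬ ∀ N : ModuleCat.{u} R,
        UnifSTorsion S (((Ext R (ModuleCat.{u} R) 1).obj
          (Opposite.op (ModuleCat.of R (R ⧸ Ideal.span {a})))).obj N)) ∧
      ∀ k : ℕ, 2 ≤ k → ∀ N : ModuleCat.{u} R,
        ∀ x : ((Ext R (ModuleCat.{u} R) k).obj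
          (Opposite.op (ModuleCat.of R (R ⧸ Ideal.span {a})))).obj N, x = 0 := by
  have hT := quotientSpanSingletonShortComplex_shortExact ha
  have hR : Projective (ModuleCat.of R R) := inferInstance
  have : Projective (quotientSpanSingletonShortComplex a).X₁ := hR
  have : Projective (quotientSpanSingletonShortComplex a).X₂ := hR
  refine ⟨fun h => ?_, fun k hk N x => ?_⟩
  · obtain ⟨s, hs, hsx⟩ := h (ModuleCat.of R R)
    obtain ⟨g, hg⟩ := hT.exists_comp_eq_smul_of_smul_Ext_one_eq_zero hsx (𝟙 (ModuleCat.of R R))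
    let φ : R →ₗ[R] R := g.hom
    have hφ : φ (a • 1) = s • 1 := ConcreteCategory.congr_hom hg (1 : R)
    rw [map_smul, smul_eq_mul, smul_eq_mul, mul_one] at hφ
    exact hdvd s hs ⟨φ 1, hφ.symm⟩
  · obtain ⟨n, rfl⟩ := Nat.exists_eq_add_of_le' hk
    have := ModuleCat.subsingleton_of_isZero (hT.isZero_Ext_add_two (A := R) n N)
    exact this.elim _ _
end

section
/- Let R be a commutative ring, S a multiplicative subset of R, M an R-module, and M[x] = R[x] ⊗_R M the induced R[x]-module (the polynomial module over M). Then for every integer n ≥ 0: Ext^{n+1}_R(M, N) is uniformly S-torsion for every R-module N if and only if Ext^{n+1}_{R[x]}(M[x], N) is uniformly S-torsion for every R[x]-module N. (That is, S-pd_{R[x]}(M[x]) = S-pd_R(M).) -/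
open CategoryTheory TensorProduct

universe u

lemma LinearEquiv.forall_smul_eq_zero_iff_s18 {A V W : Type*} [Semiring A] [AddCommMonoid V]
    [AddCommMonoid W] [Module A V] [Module A W] (e : V ≃ₗ[A] W) (a : A) :
    (∀ x : V, a • x = 0) ↔ ∀ y : W, a • y = 0 :=
  e.toEquiv.forall_congr fun x ↦ by simpa using (map_smul e a x ▸ e.map_eq_zero_iff).symm

lemma CategoryTheory.ShortComplex.smul_moduleCat_homology_eq_zero_iff {A : Type*} [CommRing A]
    (T : ShortComplex (ModuleCat A)) (a : A) :
    (∀ x : T.homology, a • x = 0) ↔ ∀ y : T.X₂, T.g y = 0 → ∃ z : T.X₁, T.f z = a • y := by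
  rw [T.moduleCatHomologyIso.toLinearEquiv.forall_smul_eq_zero_iff_s18]
  change (∀ x : LinearMap.ker T.g.hom ⧸ LinearMap.range T.moduleCatToCycles, a • x = 0) ↔ _
  refine (Submodule.Quotient.mk_surjective _).forall.trans (Subtype.forall.trans ?_)
  refine forall₂_congr fun y hy ↦ ?_
  rw [← Submodule.Quotient.mk_smul, Submodule.Quotient.mk_eq_zero]
  exact exists_congr fun z ↦ Subtype.ext_iff

/-- In terms of a projective resolution `P` of `X`, a scalar `a` kills `Ext^{n+1}(X, Y)` iff
`a • f` is a coboundary for every cocycle `f : P_{n+1} ⟶ Y`. -/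
lemma CategoryTheory.ProjectiveResolution.smul_ext_eq_zero_iff {A : Type*} [CommRing A] {C : Type*}
    [Category* C] [Abelian C] [Linear A C] [EnoughProjectives C] {X : C}
    (P : ProjectiveResolution X) (Y : C) (n : ℕ) (a : A) :
    (∀ x : ((Ext A C (n + 1)).obj (Opposite.op X)).obj Y, a • x = 0) ↔
      ∀ f : P.complex.X (n + 1) ⟶ Y, P.complex.d (n + 2) (n + 1) ≫ f = 0 →
        ∃ g : P.complex.X n ⟶ Y, P.complex.d (n + 1) n ≫ g = a • f := by
  rw [(P.isoExt (R := A) (n + 1) Y ≪≫ (P.complex.linearYonedaObj A Y).homologyIsoSc'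
    n (n + 1) (n + 2) (by simp) (by simp)).toLinearEquiv.forall_smul_eq_zero_iff_s18,
    ShortComplex.smul_moduleCat_homology_eq_zero_iff]
  rfl

/-- For an adjunction `F ⊣ G` of exact functors between linear abelian categories, scalars `b` and
`a` that correspond under the adjunction kill `Ext(F X, Y)` and `Ext(X, G Y)` simultaneously. -/
lemma CategoryTheory.Adjunction.smul_ext_eq_zero_iff {A B : Type*} [CommRing A] [CommRing B]
    {C D : Type*} [Category* C] [Abelian C] [Linear A C] [EnoughProjectives C]
    [Category* D] [Abelian D] [Linear B D] [EnoughProjectives D]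
    {F : C ⥤ D} {G : D ⥤ C} (adj : F ⊣ G) [F.Additive] [F.PreservesHomology]
    [G.PreservesEpimorphisms] (X : C) (Y : D) (n : ℕ) (a : A) (b : B)
    (hab : ∀ (Z : C) (f : F.obj Z ⟶ Y), adj.homEquiv Z Y (b • f) = a • adj.homEquiv Z Y f) :
    (∀ x : ((Ext B D (n + 1)).obj (Opposite.op (F.obj X))).obj Y, b • x = 0) ↔
      ∀ x : ((Ext A C (n + 1)).obj (Opposite.op X)).obj (G.obj Y), a • x = 0 := by
  have := Functor.preservesProjectiveObjects_of_adjunction_of_preservesEpimorphisms adj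
  have := adj.right_adjoint_additive
  let P := projectiveResolution X
  rw [(F.mapProjectiveResolution P).smul_ext_eq_zero_iff, P.smul_ext_eq_zero_iff]
  have hz (Z : C) (f : F.obj Z ⟶ Y) : f = 0 ↔ adj.homEquiv Z Y f = 0 := by
    rw [← (adj.homEquiv Z Y).injective.eq_iff]
    simp [adj.homEquiv_unit]
  refine (adj.homEquiv _ _).forall_congr fun f ↦ imp_congr ?_ ?_
  · change F.map (P.complex.d _ _) ≫ f = 0 ↔ _
    rw [hz, adj.homEquiv_naturality_left]
  · refine (adj.homEquiv _ _).exists_congr fun g ↦ ?_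
    rw [← hab, ← adj.homEquiv_naturality_left, (adj.homEquiv _ _).injective.eq_iff]
    rfl

namespace ModuleCat

variable (R A : Type u) [CommRing R] [CommRing A] [Algebra R A]

/-- The base change functor `M ↦ A ⊗[R] M` along an algebra `R → A`. -/
@[simps]
noncomputable def baseChange : ModuleCat.{u} R ⥤ ModuleCat.{u} A where
  obj M := of A (A ⊗[R] M)
  map f := ofHom (f.hom.baseChange A)
  map_comp f g := by
    ext : 1
    exact LinearMap.baseChange_comp _ _

instance : (baseChange R A).Additive where
  map_add {_ _ f g} := by
    ext : 1
    exact LinearMap.baseChange_add f.hom g.hom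

instance [Module.Flat R A] : (baseChange R A).PreservesHomology :=
  Functor.preservesHomology_of_map_exact _ fun T hT ↦ by
    rw [ShortComplex.ShortExact.moduleCat_exact_iff_function_exact] at hT ⊢
    exact Module.Flat.lTensor_exact A hT

variable {R A} in
/-- The bijection between `A`-linear maps `A ⊗[R] M → N` and `R`-linear maps `M → N`. -/
noncomputable def baseChangeHomEquiv (M : ModuleCat.{u} R) (N : ModuleCat.{u} A) :
    ((baseChange R A).obj M ⟶ N) ≃ (M ⟶ (restrictScalars.{u} (algebraMap R A)).obj N) :=
  letI : Module R N := Module.compHom N (algebraMap R A)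
  haveI : IsScalarTower R A N := .of_algebraMap_smul fun _ _ ↦ rfl
  let e : (A ⊗[R] M →ₗ[A] N) ≃ (M →ₗ[R] N) := (LinearMap.liftBaseChangeEquiv A).symm.toEquiv
  homEquiv.trans
    (e.trans (homEquiv (M := M) (N := (restrictScalars (algebraMap R A)).obj N)).symm)

/-- Base change is left adjoint to restriction of scalars. -/
noncomputable def baseChangeRestrictScalarsAdj :
    baseChange R A ⊣ restrictScalars.{u} (algebraMap R A) :=
  Adjunction.mkOfHomEquiv
    { homEquiv := baseChangeHomEquiv
      homEquiv_naturality_left_symm {M M' N} f g := by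
        ext : 1
        let : Module R N := Module.compHom N (algebraMap R A)
        have : IsScalarTower R A N := .of_algebraMap_smul fun _ _ ↦ rfl
        apply TensorProduct.AlgebraTensorModule.curry_injective
        ext m
        rfl
      homEquiv_naturality_right f g := rfl }

variable {R A}

lemma smul_ext_baseChange_eq_zero_iff [Module.Flat R A] (M : ModuleCat.{u} R)
    (N : ModuleCat.{u} A) (n : ℕ) (r : R) :
    (∀ x : ((Ext A (ModuleCat.{u} A) (n + 1)).obj
        (Opposite.op ((baseChange R A).obj M))).obj N, algebraMap R A r • x = 0) ↔
      ∀ x : ((Ext R (ModuleCat.{u} R) (n + 1)).obj (Opposite.op M)).obj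
        ((restrictScalars (algebraMap R A)).obj N), r • x = 0 :=
  (baseChangeRestrictScalarsAdj R A).smul_ext_eq_zero_iff M N n r _ fun _ _ ↦ rfl

end ModuleCat

/-- For an `R`-module `M` and the induced `R[x]`-module `M[x] = R[x] ⊗_R M`:
`Ext^{n+1}_R(M, -)` is uniformly `S`-torsion iff `Ext^{n+1}_{R[x]}(M[x], -)` is uniformly
`S`-torsion (with `S ⊆ R` viewed in `R[x]` via the constant embedding).
That is, `S`-pd_{R[x]}(M[x]) = `S`-pd_R(M). -/
theorem stmt18 {R : Type u} [CommRing R] (S : Submonoid R)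
    (M : Type u) [AddCommGroup M] [Module R M] (n : ℕ) :
    (∀ N : ModuleCat.{u} R, ∃ s ∈ S,
        ∀ x : ((Ext R (ModuleCat.{u} R) (n + 1)).obj
            (Opposite.op (ModuleCat.of R M))).obj N,
          s • x = 0) ↔
      (∀ N : ModuleCat.{u} (Polynomial R), ∃ s ∈ S,
        ∀ x : ((Ext (Polynomial R) (ModuleCat.{u} (Polynomial R)) (n + 1)).obj
            (Opposite.op (ModuleCat.of (Polynomial R) (Polynomial R ⊗[R] M)))).obj N,
          (Polynomial.C s : Polynomial R) • x = 0) := by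
  have key (N : ModuleCat.{u} (Polynomial R)) (s : R) :=
    ModuleCat.smul_ext_baseChange_eq_zero_iff (ModuleCat.of R M) N n s
  constructor
  · intro h N
    obtain ⟨s, hs, hN⟩ := h ((ModuleCat.restrictScalars (algebraMap R (Polynomial R))).obj N)
    exact ⟨s, hs, (key N s).2 hN⟩
  · intro h N
    obtain ⟨s, hs, hN⟩ := h ((ModuleCat.restrictScalars (Polynomial.evalRingHom 0)).obj N)
    let i : (ModuleCat.restrictScalars (algebraMap R (Polynomial R))).obj
        ((ModuleCat.restrictScalars (Polynomial.evalRingHom 0)).obj N) ≅ N :=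
      (ModuleCat.restrictScalarsComp'App _ _ (RingHom.id R) (by ext; simp) N).symm ≪≫
        ModuleCat.restrictScalarsId'App _ rfl N
    exact ⟨s, hs, ((((Ext R (ModuleCat.{u} R) (n + 1)).obj (Opposite.op (ModuleCat.of R M))).mapIso
      i).toLinearEquiv.forall_smul_eq_zero_iff_s18 s).1 ((key _ s).1 hN)⟩
end
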